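/- arXiv:1207.2008 — 4 statements merged into one kernel-verified Lean document; each statement's English description precedes it below -/
import Mathlib

section
/- For every n ≥ 1: every up-down permutation σ of length 2n satisfies mmp^{(1,0,∅,0)}(σ) ≤ n, and the number of up-down permutations σ of length 2n with mmp^{(1,0,∅,0)}(σ) = n equals (2n−1)!!. (Equivalently, the highest power of x appearing in A^{(1,0,∅,0)}_{2n}(x) is x^n, with coefficient (2n−1)!!.) -/
/-- A permutation `σ` of `{1,…,n}` (as a permutation of `Fin n`) is up-down if
`σ_1 < σ_2 > σ_3 < σ_4 > ⋯`. -/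
def UpDown {n : ℕ} (σ : Equiv.Perm (Fin n)) : Prop :=
  ∀ i : Fin n, ∀ h : i.val + 1 < n,
    if Even i.val then σ i < σ ⟨i.val + 1, h⟩ else σ ⟨i.val + 1, h⟩ < σ i

/-- A permutation is down-up if `σ_1 > σ_2 < σ_3 > σ_4 < ⋯`. -/
def DownUp {n : ℕ} (σ : Equiv.Perm (Fin n)) : Prop :=
  ∀ i : Fin n, ∀ h : i.val + 1 < n,
    if Even i.val then σ ⟨i.val + 1, h⟩ < σ i else σ i < σ ⟨i.val + 1, h⟩

/-- `σ_i` matches `MMP(1,0,∅,0)`: there exists `j > i` with `σ_j > σ_i` and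
there is no `j < i` with `σ_j < σ_i`. -/
def Matches1 {n : ℕ} (σ : Equiv.Perm (Fin n)) (i : Fin n) : Prop :=
  (∃ j, i < j ∧ σ i < σ j) ∧ ¬ ∃ j, j < i ∧ σ j < σ i

/-- `mmp^{(1,0,∅,0)}(σ)`: the number of indices matching `MMP(1,0,∅,0)` in `σ`. -/
noncomputable def mmp1 {n : ℕ} (σ : Equiv.Perm (Fin n)) : ℕ :=
  {i : Fin n | Matches1 σ i}.ncard

/-- The odd double factorial `(2n−1)!! = ∏_{i=1}^{n} (2i−1)`. -/
def oddDF (n : ℕ) : ℕ := ∏ i ∈ Finset.range n, (2*i+1)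

/-- The even double factorial `(2n)!! = ∏_{i=1}^{n} 2i`. -/
def evenDF (n : ℕ) : ℕ := ∏ i ∈ Finset.range n, (2*i+2)

/-- All even (0-based) positions are left-to-right minima, and each is below its right neighbour. -/
def GoodPerm {m : ℕ} (σ : Equiv.Perm (Fin m)) : Prop :=
  (∀ i j : Fin m, Even i.val → j < i → σ i < σ j) ∧
  (∀ i : Fin m, ∀ h : i.val + 1 < m, Even i.val → σ i < σ ⟨i.val + 1, h⟩)

lemma ncard_evens (n : ℕ) : {i : Fin (2*n) | Even i.val}.ncard = n := by
  have h : {i : Fin (2*n) | Even i.val} =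
      (fun i : Fin n => (⟨2 * i.val, by omega⟩ : Fin (2*n))) '' Set.univ := by
    ext i
    simp only [Set.mem_ofPred_eq, Set.image_univ, Set.mem_range]
    constructor
    · rintro ⟨k, hk⟩
      exact ⟨⟨k, by omega⟩, by ext; simp; omega⟩
    · rintro ⟨k, rfl⟩
      exact even_two_mul _
  rw [h, Set.ncard_image_of_injective, Set.ncard_univ, Nat.card_eq_fintype_card, Fintype.card_fin]
  intro a b hab
  simp only [Fin.mk.injEq] at hab
  ext; omega

lemma matches_subset {n : ℕ} (σ : Equiv.Perm (Fin (2*n))) (hσ : UpDown σ) :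
    {i : Fin (2*n) | Matches1 σ i} ⊆ {i : Fin (2*n) | Even i.val} := by
  intro i hi
  by_contra hodd
  simp only [Set.mem_ofPred_eq] at hodd
  rw [Nat.not_even_iff_odd] at hodd
  obtain ⟨k, hk⟩ := hodd
  have h1 := hσ ⟨2*k, by omega⟩ (by simp; omega)
  rw [if_pos (by simp)] at h1
  apply hi.2
  refine ⟨⟨2*k, by omega⟩, by rw [Fin.lt_def]; simp; omega, ?_⟩
  convert h1 using 2
  ext; simp; omega

lemma good_iff {n : ℕ} (σ : Equiv.Perm (Fin (2*n))) :
    (UpDown σ ∧ mmp1 σ = n) ↔ GoodPerm σ := by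
  constructor
  · rintro ⟨hσ, hm⟩
    have heq := Set.eq_of_subset_of_ncard_le (matches_subset σ hσ)
      (by rw [ncard_evens]; exact hm.ge)
    refine ⟨?_, ?_⟩
    · intro i j hi hj
      have : i ∈ {i : Fin (2*n) | Matches1 σ i} := by rw [heq]; exact hi
      have h2 := this.2
      push Not at h2
      exact lt_of_le_of_ne (h2 j hj) (fun h => hj.ne (σ.injective h).symm)
    · intro i h hi
      have := hσ i h
      rwa [if_pos hi] at this
  · rintro ⟨h1, h2⟩
    have hσ : UpDown σ := by
      intro i h
      split_ifs with he
      · exact h2 i h he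
      · apply h1
        · simp only; exact Nat.even_add_one.mpr he
        · rw [Fin.lt_def]; simp
    refine ⟨hσ, ?_⟩
    have heq : {i : Fin (2*n) | Matches1 σ i} = {i : Fin (2*n) | Even i.val} := by
      apply Set.Subset.antisymm (matches_subset σ hσ)
      intro i hi
      have hi' : Even i.val := hi
      have hlt : i.val + 1 < 2*n := by
        obtain ⟨k, hk⟩ := hi'
        have := i.isLt
        omega
      refine ⟨⟨⟨i.val+1, hlt⟩, by rw [Fin.lt_def]; simp, h2 i hlt hi'⟩, ?_⟩
      rintro ⟨j, hj, hlt2⟩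
      exact absurd (h1 i j hi' hj) (not_lt.mpr hlt2.le)
    rw [mmp1, heq, ncard_evens]

/-- Append the pair `(0, b+1)` to `τ`, relabelling order-preservingly. -/
def extFun {k : ℕ} (b : Fin (k+1)) (τ : Fin k → Fin k) : Fin (k+2) → Fin (k+2) := fun i =>
  if h : i.val < k then (b.succAbove (τ ⟨i.val, h⟩)).succ
  else if i.val = k then 0 else b.succ

lemma extFun_lt {k : ℕ} (b : Fin (k+1)) (τ : Fin k → Fin k) (i : Fin (k+2)) (h : i.val < k) :
    extFun b τ i = (b.succAbove (τ ⟨i.val, h⟩)).succ := by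
  simp [extFun, h]

lemma extFun_k {k : ℕ} (b : Fin (k+1)) (τ : Fin k → Fin k) (i : Fin (k+2)) (h : i.val = k) :
    extFun b τ i = 0 := by
  simp [extFun, h]

lemma extFun_last {k : ℕ} (b : Fin (k+1)) (τ : Fin k → Fin k) (i : Fin (k+2))
    (h : i.val = k + 1) : extFun b τ i = b.succ := by
  simp [extFun, h]

lemma fin_cases3 {k : ℕ} (i : Fin (k+2)) : i.val < k ∨ i.val = k ∨ i.val = k+1 := by
  have := i.isLt
  omega

lemma extFun_injective {k : ℕ} (b : Fin (k+1)) (τ : Equiv.Perm (Fin k)) :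
    Function.Injective (extFun b τ) := by
  intro i j hij
  rcases fin_cases3 i with hi | hi | hi <;> rcases fin_cases3 j with hj | hj | hj
  · rw [extFun_lt _ _ _ hi, extFun_lt _ _ _ hj] at hij
    have := τ.injective (Fin.succAbove_right_injective (Fin.succ_injective _ hij))
    simp only [Fin.mk.injEq] at this
    exact Fin.ext this
  · rw [extFun_lt _ _ _ hi, extFun_k _ _ _ hj] at hij
    exact absurd hij (Fin.succ_ne_zero _)
  · rw [extFun_lt _ _ _ hi, extFun_last _ _ _ hj] at hij
    exact absurd (Fin.succ_injective _ hij) (Fin.succAbove_ne _ _)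
  · rw [extFun_lt _ _ _ hj, extFun_k _ _ _ hi] at hij
    exact absurd hij.symm (Fin.succ_ne_zero _)
  · exact Fin.ext (by omega)
  · rw [extFun_k _ _ _ hi, extFun_last _ _ _ hj] at hij
    exact absurd hij.symm (Fin.succ_ne_zero _)
  · rw [extFun_lt _ _ _ hj, extFun_last _ _ _ hi] at hij
    exact absurd (Fin.succ_injective _ hij.symm) (Fin.succAbove_ne _ _)
  · rw [extFun_k _ _ _ hj, extFun_last _ _ _ hi] at hij
    exact absurd hij (Fin.succ_ne_zero _)
  · exact Fin.ext (by omega)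

noncomputable def extPerm {k : ℕ} (p : Fin (k+1) × Equiv.Perm (Fin k)) :
    Equiv.Perm (Fin (k+2)) :=
  Equiv.ofBijective (extFun p.1 p.2) (Finite.injective_iff_bijective.mp (extFun_injective p.1 p.2))

lemma extPerm_apply {k : ℕ} (p : Fin (k+1) × Equiv.Perm (Fin k)) (i : Fin (k+2)) :
    extPerm p i = extFun p.1 p.2 i := rfl

lemma extPerm_injective {k : ℕ} : Function.Injective (extPerm (k := k)) := by
  rintro ⟨b, τ⟩ ⟨c, ρ⟩ h
  have h' : ∀ i, extFun b τ i = extFun c ρ i := fun i => by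
    have := congrArg (fun f => f i) h
    simpa [extPerm_apply] using this
  have hb : b = c := by
    have := h' ⟨k+1, by omega⟩
    rw [extFun_last _ _ _ rfl, extFun_last _ _ _ rfl] at this
    exact Fin.succ_injective _ this
  subst hb
  congr 1
  ext1 i
  have := h' ⟨i.val, by omega⟩
  rw [extFun_lt _ _ _ i.isLt, extFun_lt _ _ _ i.isLt] at this
  exact Fin.succAbove_right_injective (Fin.succ_injective _ this)

lemma extPerm_good {k : ℕ} (hk : Even k) (b : Fin (k+1)) (τ : Equiv.Perm (Fin k))
    (hτ : GoodPerm τ) : GoodPerm (extPerm (b, τ)) := by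
  refine ⟨?_, ?_⟩
  · intro i j hi hj
    rw [Fin.lt_def] at hj
    simp only [extPerm_apply]
    rcases fin_cases3 i with h | h | h
    · rw [extFun_lt _ _ _ h, extFun_lt _ _ _ (hj.trans h), Fin.succ_lt_succ_iff,
        (Fin.strictMono_succAbove b).lt_iff_lt]
      exact hτ.1 _ _ hi hj
    · rw [extFun_k _ _ _ h, extFun_lt _ _ _ (by omega)]
      exact Fin.succ_pos _
    · rw [h] at hi
      exact absurd hk (Nat.even_add_one.mp hi)
  · intro i h hi
    simp only [extPerm_apply]
    rcases fin_cases3 i with h' | h' | h'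
    · have : i.val + 1 < k := by
        obtain ⟨a, ha⟩ := hk
        obtain ⟨c, hc⟩ := hi
        omega
      rw [extFun_lt _ _ _ h', extFun_lt _ _ _ this, Fin.succ_lt_succ_iff,
        (Fin.strictMono_succAbove b).lt_iff_lt]
      exact hτ.2 _ this hi
    · rw [extFun_k _ _ _ h', extFun_last _ _ _ (by simp [h'])]
      exact Fin.succ_pos _
    · omega

lemma exists_of_good {k : ℕ} (hk : Even k) (σ : Equiv.Perm (Fin (k+2))) (hσ : GoodPerm σ) :
    ∃ b : Fin (k+1), ∃ τ : Equiv.Perm (Fin k), GoodPerm τ ∧ extPerm (b, τ) = σ := by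
  have hmin : ∀ j, σ ⟨k, by omega⟩ ≤ σ j := by
    intro j
    rcases fin_cases3 j with h | h | h
    · exact (hσ.1 ⟨k, by omega⟩ j hk (by rw [Fin.lt_def]; exact h)).le
    · apply le_of_eq; congr 1; ext; simp [h]
    · have := hσ.2 ⟨k, by omega⟩ (by simp) hk
      have e : j = ⟨k+1, by omega⟩ := Fin.ext h
      rw [e]; exact this.le
  have h0 : σ ⟨k, by omega⟩ = 0 := by
    have := hmin (σ.symm 0)
    simpa using this
  have hne0 : ∀ j : Fin (k+2), j.val ≠ k → σ j ≠ 0 := by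
    intro j hj h
    rw [← h0] at h
    exact hj (congrArg Fin.val (σ.injective h))
  obtain ⟨b, hb⟩ := Fin.exists_succ_eq.mpr (hne0 ⟨k+1, by omega⟩ (by simp))
  have hex : ∀ i : Fin k, ∃ c : Fin k, (b.succAbove c).succ = σ ⟨i.val, by omega⟩ := by
    intro i
    obtain ⟨d, hd⟩ := Fin.exists_succ_eq.mpr (hne0 ⟨i.val, by omega⟩ (by simp; omega))
    have hdb : d ≠ b := by
      rintro rfl
      rw [hb] at hd
      have := congrArg Fin.val (σ.injective hd)
      simp at this
      omega
    obtain ⟨c, hc⟩ := Fin.exists_succAbove_eq hdb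
    exact ⟨c, by rw [hc, hd]⟩
  choose f hf using hex
  have hfi : Function.Injective f := by
    intro i j hij
    have h1 := hf i
    rw [hij, hf j] at h1
    have := congrArg Fin.val (σ.injective h1)
    exact Fin.ext this.symm
  have hlt : ∀ i j : Fin k, σ ⟨i.val, by omega⟩ < σ ⟨j.val, by omega⟩ → f i < f j := by
    intro i j h
    rwa [← hf i, ← hf j, Fin.succ_lt_succ_iff, (Fin.strictMono_succAbove b).lt_iff_lt] at h
  refine ⟨b, Equiv.ofBijective f (Finite.injective_iff_bijective.mp hfi), ⟨?_, ?_⟩, ?_⟩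
  · intro i j hi hj
    exact hlt i j (hσ.1 _ _ hi hj)
  · intro i h hi
    exact hlt i ⟨i.val+1, h⟩ (hσ.2 ⟨i.val, by omega⟩ (by simp) hi)
  · ext1 i
    rw [extPerm_apply]
    rcases fin_cases3 i with h | h | h
    · rw [extFun_lt _ _ _ h]
      exact hf ⟨i.val, h⟩
    · rw [extFun_k _ _ _ h, ← h0]
      congr 1; exact Fin.ext h.symm
    · rw [extFun_last _ _ _ h]
      have e : i = ⟨k+1, by omega⟩ := Fin.ext h
      rw [e]; exact hb

lemma good_rec {k : ℕ} (hk : Even k) :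
    {σ : Equiv.Perm (Fin (k+2)) | GoodPerm σ}.ncard =
      (k+1) * {σ : Equiv.Perm (Fin k) | GoodPerm σ}.ncard := by
  have h : {σ : Equiv.Perm (Fin (k+2)) | GoodPerm σ} =
      extPerm '' ((Set.univ : Set (Fin (k+1))) ×ˢ {σ : Equiv.Perm (Fin k) | GoodPerm σ}) := by
    ext σ
    constructor
    · intro hσ
      obtain ⟨b, τ, hτ, e⟩ := exists_of_good hk σ hσ
      exact ⟨(b, τ), ⟨Set.mem_univ _, hτ⟩, e⟩
    · rintro ⟨⟨b, τ⟩, ⟨_, hτ⟩, rfl⟩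
      exact extPerm_good hk b τ hτ
  rw [h, Set.ncard_image_of_injective _ extPerm_injective, Set.ncard_prod, Set.ncard_univ,
    Nat.card_eq_fintype_card, Fintype.card_fin]

lemma good_count (n : ℕ) : {σ : Equiv.Perm (Fin (2*n)) | GoodPerm σ}.ncard = oddDF n := by
  induction n with
  | zero =>
    have : {σ : Equiv.Perm (Fin (2*0)) | GoodPerm σ} = {1} := by
      ext σ
      simp only [Set.mem_ofPred_eq, Set.mem_singleton_iff]
      constructor
      · intro _
        ext i
        exact absurd i.isLt (by omega)
      · intro _
        exact ⟨fun i => absurd i.isLt (by omega), fun i => absurd i.isLt (by omega)⟩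
    rw [this]
    simp [oddDF]
  | succ n ih =>
    have := good_rec (k := 2*n) (even_two_mul n)
    rw [ih] at this
    rw [mul_comm (2*n+1)] at this
    rw [oddDF, Finset.prod_range_succ]
    exact this

theorem stmt11 (n : ℕ) (hn : 1 ≤ n) :
    (∀ σ : Equiv.Perm (Fin (2*n)), UpDown σ → mmp1 σ ≤ n) ∧
    {σ : Equiv.Perm (Fin (2*n)) | UpDown σ ∧ mmp1 σ = n}.ncard = oddDF n := by
  refine ⟨?_, ?_⟩
  · intro σ hσ
    have := Set.ncard_le_ncard (matches_subset σ hσ)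
    rwa [ncard_evens] at this
  · simp only [good_iff]
    exact good_count n
end

section
/- For every n ≥ 1, the number of down-up permutations σ = σ_1…σ_{2n+1} of length 2n+1 with mmp^{(1,0,∅,0)}(σ) + χ(σ_1 = 2n+1) = n equals (1/3)·(n²−1)·(2n)!!. (Equivalently, the coefficient of x^n in D̄^{(1,0,∅,0)}_{2n+1}(x) is (n²−1)((2n)!!)/3.) -/
/-- The statistic `mmp^{(1,0,∅,0)}(σ) + χ(σ_1 = 2n+1)` on permutations of length `2n+1`:
the indicator adds 1 when the first entry is the largest value `2n+1`
(i.e. `2*n` as an element of `Fin (2n+1)`). -/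
noncomputable def dbarStat (n : ℕ) (σ : Equiv.Perm (Fin (2*n+1))) : ℕ :=
  mmp1 σ + if (σ ⟨0, by omega⟩).val = 2*n then 1 else 0

open Finset in
/-- number of left-to-right minima -/
def lr {n : ℕ} (σ : Equiv.Perm (Fin n)) : ℕ :=
  #{i : Fin n | ∀ j, j < i → σ i < σ j}

/-- append a last value `v`, shifting the other values -/
def appendLast {m : ℕ} (p : Fin (m+1) × Equiv.Perm (Fin m)) : Equiv.Perm (Fin (m+1)) :=
  ((finSuccEquiv' (Fin.last m)).trans (Equiv.optionCongr p.2)).trans (finSuccEquiv' p.1).symm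

theorem appendLast_last {m : ℕ} (v : Fin (m+1)) (τ : Equiv.Perm (Fin m)) :
    appendLast (v, τ) (Fin.last m) = v := by
  simp [appendLast]

theorem appendLast_castSucc {m : ℕ} (v : Fin (m+1)) (τ : Equiv.Perm (Fin m)) (i : Fin m) :
    appendLast (v, τ) i.castSucc = v.succAbove (τ i) := by
  have : finSuccEquiv' (Fin.last m) i.castSucc = some i := by
    rw [← Fin.succAbove_last_apply]
    exact finSuccEquiv'_succAbove _ _
  simp [appendLast, this]

theorem appendLast_bij (m : ℕ) : Function.Bijective (appendLast (m := m)) := by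
  rw [Fintype.bijective_iff_injective_and_card]
  constructor
  · rintro ⟨v, τ⟩ ⟨w, ρ⟩ h
    have hv : v = w := by
      have := congrArg (fun σ => σ (Fin.last m)) h
      simpa only [appendLast_last] using this
    subst hv
    congr 1
    ext i
    have := congrArg (fun σ => σ i.castSucc) h
    simp only [appendLast_castSucc] at this
    rw [Fin.succAbove_right_injective this]
  · simp [Fintype.card_perm, Nat.factorial_succ]

theorem lr_appendLast {m : ℕ} (v : Fin (m+1)) (τ : Equiv.Perm (Fin m)) :
    lr (appendLast (v, τ)) = lr τ + if v.val = 0 then 1 else 0 := by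
  have h1 : ∀ i : Fin m, (∀ j, j < i.castSucc → appendLast (v, τ) i.castSucc < appendLast (v, τ) j)
      ↔ ∀ j, j < i → τ i < τ j := by
    intro i
    constructor
    · intro h j hj
      have := h j.castSucc (Fin.castSucc_lt_castSucc_iff.2 hj)
      simpa only [appendLast_castSucc, Fin.succAbove_lt_succAbove_iff] using this
    · intro h j hj
      obtain ⟨j, rfl⟩ : ∃ j' : Fin m, j = j'.castSucc :=
        ⟨⟨j.val, lt_of_lt_of_le (Fin.lt_def.1 hj) i.2.le⟩, rfl⟩
      have := h j (Fin.castSucc_lt_castSucc_iff.1 hj)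
      simpa only [appendLast_castSucc, Fin.succAbove_lt_succAbove_iff] using this
  have h2 : (∀ j, j < Fin.last m → appendLast (v, τ) (Fin.last m) < appendLast (v, τ) j)
      ↔ v.val = 0 := by
    rw [appendLast_last]
    constructor
    · intro h
      by_contra h0
      obtain ⟨j, hj⟩ := (appendLast (v, τ)).surjective 0
      have hne : j ≠ Fin.last m := by
        rintro rfl
        rw [appendLast_last] at hj
        exact h0 (by rw [hj]; rfl)
      have := h j (Fin.lt_last_iff_ne_last.2 hne)
      rw [hj] at this
      exact absurd this (Fin.not_lt_zero v)
    · intro h j hj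
      have hne : appendLast (v, τ) j ≠ v := by
        intro e
        apply hj.ne
        apply (appendLast (v, τ)).injective
        rw [e, appendLast_last]
      have : (appendLast (v, τ) j).val ≠ v.val := fun e => hne (Fin.ext e)
      rw [Fin.lt_def]; omega
  unfold lr
  simp only [Finset.card_filter]
  rw [Fin.sum_univ_castSucc]
  simp only [h1, h2]

theorem downUp_appendLast {m : ℕ} (v : Fin (m+2)) (τ : Equiv.Perm (Fin (m+1))) :
    DownUp (appendLast (v, τ)) ↔ DownUp τ ∧
      (if Even m then v.val ≤ (τ (Fin.last m)).val else (τ (Fin.last m)).val < v.val) := by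
  have key : (if Even m then v < v.succAbove (τ (Fin.last m)) else v.succAbove (τ (Fin.last m)) < v)
      ↔ (if Even m then v.val ≤ (τ (Fin.last m)).val else (τ (Fin.last m)).val < v.val) := by
    split_ifs
    · rw [Fin.lt_succAbove_iff_le_castSucc]; rfl
    · rw [Fin.succAbove_lt_iff_castSucc_lt]; rfl
  rw [← key]
  constructor
  · intro h
    refine ⟨fun i hi => ?_, ?_⟩
    · have h1 := h i.castSucc (by simp; omega)
      have e : (⟨i.castSucc.val + 1, by simp; omega⟩ : Fin (m+2)) = Fin.castSucc ⟨i.val+1, hi⟩ := rfl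
      rw [e] at h1
      simpa only [appendLast_castSucc, Fin.val_castSucc, Fin.succAbove_lt_succAbove_iff] using h1
    · have h1 := h (Fin.last m).castSucc (by simp)
      have e : (⟨(Fin.last m).castSucc.val + 1, by simp⟩ : Fin (m+2)) = Fin.last (m+1) := rfl
      rw [e] at h1
      simpa only [appendLast_castSucc, appendLast_last, Fin.val_castSucc, Fin.val_last] using h1
  · rintro ⟨h, h2⟩ i hi
    obtain ⟨i, rfl⟩ : ∃ j : Fin (m+1), i = j.castSucc := ⟨⟨i.val, by omega⟩, rfl⟩
    by_cases hm : i.val + 1 < m + 1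
    · have e : (⟨i.castSucc.val + 1, hi⟩ : Fin (m+2)) = Fin.castSucc ⟨i.val+1, hm⟩ := rfl
      rw [e]
      simpa only [appendLast_castSucc, Fin.val_castSucc, Fin.succAbove_lt_succAbove_iff] using h i hm
    · obtain rfl : i = Fin.last m := by
        ext; simp; omega
      have e : (⟨(Fin.last m).castSucc.val + 1, hi⟩ : Fin (m+2)) = Fin.last (m+1) := rfl
      rw [e]
      simpa only [appendLast_castSucc, appendLast_last, Fin.val_castSucc, Fin.val_last] using h2

open Classical in
/-- down-up permutations of length `m+1` with last value `v` and `k` left-to-right minima -/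
noncomputable def cnt (m v k : ℕ) : ℕ :=
  (Finset.univ.filter (fun σ : Equiv.Perm (Fin (m+1)) =>
    DownUp σ ∧ (σ (Fin.last m)).val = v ∧ lr σ = k)).card

open Classical in
theorem cnt_succ (m v k : ℕ) (hv : v ≤ m + 1) :
    cnt (m+1) v k = (Finset.univ.filter (fun τ : Equiv.Perm (Fin (m+1)) => 
      (DownUp τ ∧ (if Even m then v ≤ (τ (Fin.last m)).val else (τ (Fin.last m)).val < v)) ∧
      lr τ + (if v = 0 then 1 else 0) = k)).card := by
  unfold cnt
  symm
  apply Finset.card_bij (fun τ _ => appendLast (⟨v, by omega⟩, τ))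
  · intro τ hτ
    simp only [Finset.mem_filter, Finset.mem_univ, true_and] at hτ ⊢
    rw [downUp_appendLast, lr_appendLast, appendLast_last]
    exact ⟨hτ.1, rfl, hτ.2⟩
  · intro τ _ ρ _ h
    have := (appendLast_bij _).1 h
    simpa using this
  · intro σ hσ
    obtain ⟨⟨w, τ⟩, rfl⟩ := (appendLast_bij _).2 σ
    simp only [Finset.mem_filter, Finset.mem_univ, true_and] at hσ ⊢
    rw [downUp_appendLast, lr_appendLast, appendLast_last] at hσ
    obtain ⟨h1, rfl, h3⟩ := hσ
    exact ⟨τ, ⟨h1, h3⟩, rfl⟩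

open Classical in
theorem sum_cnt (m k : ℕ) (p : ℕ → Prop) [DecidablePred p] :
    (Finset.univ.filter (fun τ : Equiv.Perm (Fin (m+1)) => 
      (DownUp τ ∧ p (τ (Fin.last m)).val) ∧ lr τ = k)).card =
    ∑ u ∈ (Finset.range (m+1)).filter p, cnt m u k := by
  rw [Finset.card_eq_sum_card_fiberwise (f := fun τ => (τ (Fin.last m)).val)
    (t := (Finset.range (m+1)).filter p)]
  · apply Finset.sum_congr rfl
    intro u hu
    unfold cnt
    rw [Finset.filter_filter]
    congr 1
    ext τ
    simp only [Finset.mem_filter, Finset.mem_range, Finset.mem_univ, true_and] at hu ⊢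
    constructor
    · rintro ⟨⟨⟨a, b⟩, c⟩, d⟩; exact ⟨a, d, c⟩
    · rintro ⟨a, rfl, c⟩; exact ⟨⟨⟨a, hu.2⟩, c⟩, rfl⟩
  · intro τ hτ
    simp only [Finset.coe_filter, Finset.mem_range, Finset.mem_univ, true_and, Set.mem_ofPred_eq] at hτ ⊢
    exact ⟨by omega, hτ.1.2⟩

theorem cnt_even_zero (m k : ℕ) (hm : Even m) :
    cnt (m+1) 0 (k+1) = ∑ u ∈ Finset.range (m+1), cnt m u k := by
  rw [cnt_succ _ _ _ (by omega)]
  rw [show Finset.range (m+1) = (Finset.range (m+1)).filter (fun u => 0 ≤ u) by ext; simp,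
    ← sum_cnt]
  congr 1
  ext τ
  simp [hm]

theorem cnt_even_pos (m v k : ℕ) (hm : Even m) (h0 : 0 < v) (hv : v ≤ m + 1) :
    cnt (m+1) v k = ∑ u ∈ Finset.Ico v (m+1), cnt m u k := by
  rw [cnt_succ _ _ _ hv]
  rw [show Finset.Ico v (m+1) = (Finset.range (m+1)).filter (fun u => v ≤ u) by
    ext; simp; omega, ← sum_cnt]
  congr 1
  ext τ
  simp [hm, h0.ne']

theorem cnt_odd_zero (m k : ℕ) (hm : ¬ Even m) : cnt (m+1) 0 k = 0 := by
  rw [cnt_succ _ _ _ (by omega)]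
  simp [hm]

theorem cnt_odd_pos (m v k : ℕ) (hm : ¬ Even m) (h0 : 0 < v) (hv : v ≤ m + 1) :
    cnt (m+1) v k = ∑ u ∈ Finset.range v, cnt m u k := by
  rw [cnt_succ _ _ _ hv]
  rw [show Finset.range v = (Finset.range (m+1)).filter (fun u => u < v) by
    ext; simp; omega, ← sum_cnt]
  congr 1
  ext τ
  simp [hm, h0.ne']

theorem lr_one (σ : Equiv.Perm (Fin 1)) : lr σ = 1 := by
  unfold lr
  rw [Finset.filter_true_of_mem]
  · simp
  · intro i _ j hj; omega

theorem cnt_base (v k : ℕ) : cnt 0 v k = if v = 0 ∧ k = 1 then 1 else 0 := by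
  have hD : ∀ σ : Equiv.Perm (Fin 1), DownUp σ := fun σ i h => by omega
  unfold cnt
  simp only [hD, lr_one, true_and]
  split_ifs with h
  · rw [Finset.filter_true_of_mem]
    · simp
    · intro σ _; exact ⟨by omega, h.2.symm⟩
  · rw [Finset.filter_false_of_mem]
    · simp
    · rintro σ _ ⟨h1, h2⟩
      exact h ⟨by omega, h2.symm⟩

theorem cnt_vanish (n : ℕ) : ∀ k, n + 2 ≤ k → ∀ v, v ≤ 2*n → cnt (2*n) v k = 0 := by
  induction n with
  | zero => intro k hk v _; rw [mul_zero, cnt_base, if_neg (by omega)]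
  | succ n ih =>
    intro k hk v hv
    have e : 2*(n+1) = (2*n+1)+1 := by ring
    have ho : ¬ Even (2*n+1) := by simp
    have he : Even (2*n) := by simp
    rw [e]
    rcases Nat.eq_zero_or_pos v with rfl | h0
    · exact cnt_odd_zero _ _ ho
    rw [cnt_odd_pos _ _ _ ho h0 (by omega)]
    apply Finset.sum_eq_zero
    intro u hu
    rw [Finset.mem_range] at hu
    rcases Nat.eq_zero_or_pos u with rfl | h1
    · obtain ⟨k, rfl⟩ : ∃ j, k = j + 1 := ⟨k-1, by omega⟩
      rw [cnt_even_zero _ _ he]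
      apply Finset.sum_eq_zero
      intro w hw
      rw [Finset.mem_range] at hw
      exact ih _ (by omega) _ (by omega)
    · rw [cnt_even_pos _ _ _ he h1 (by omega)]
      apply Finset.sum_eq_zero
      intro w hw
      rw [Finset.mem_Ico] at hw
      exact ih _ (by omega) _ (by omega)

theorem cnt_top_step (n v : ℕ) (h0 : 0 < v) (hv : v ≤ 2*n+2) :
    cnt (2*(n+1)) v (n+2) = ∑ u ∈ Finset.range (2*n+1), cnt (2*n) u (n+1) := by
  have e : 2*(n+1) = (2*n+1)+1 := by ring
  have ho : ¬ Even (2*n+1) := by simp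
  have he : Even (2*n) := by simp
  rw [e, cnt_odd_pos _ _ _ ho h0 (by omega)]
  obtain ⟨v, rfl⟩ : ∃ j, v = j + 1 := ⟨v-1, by omega⟩
  rw [Finset.sum_range_succ', cnt_even_zero _ _ he, Finset.sum_eq_zero, zero_add]
  intro u hu
  rw [Finset.mem_range] at hu
  rw [cnt_even_pos _ _ _ he (by omega) (by omega)]
  apply Finset.sum_eq_zero
  intro w hw
  rw [Finset.mem_Ico] at hw
  exact cnt_vanish n _ (by omega) _ (by omega)

theorem cnt_top_sum (n : ℕ) : ∑ u ∈ Finset.range (2*n+1), cnt (2*n) u (n+1) = evenDF n := by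
  induction n with
  | zero => simp [cnt_base, evenDF]
  | succ n ih =>
    rw [Finset.sum_range_succ', Finset.sum_congr rfl (g := fun _ => evenDF n)]
    · have e : 2*(n+1) = (2*n+1)+1 := by ring
      rw [e, cnt_odd_zero _ _ (by simp)]
      simp only [evenDF, Finset.prod_range_succ, Finset.sum_const, Finset.card_range, smul_eq_mul]
      ring
    · intro u hu
      rw [Finset.mem_range] at hu
      rw [cnt_top_step _ _ (by omega) (by omega), ih]

theorem cnt_top (n v : ℕ) (h0 : 0 < v) (hv : v ≤ 2*n+2) :
    cnt (2*(n+1)) v (n+2) = evenDF n := by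
  rw [cnt_top_step _ _ h0 hv, cnt_top_sum]

/-- the count one below the top, as a sum over the last value -/
noncomputable def bb (n : ℕ) : ℕ := ∑ u ∈ Finset.range (2*n+1), cnt (2*n) u n

theorem cnt_sub_odd (n u : ℕ) (hu : u + 1 ≤ 2*n+3) :
    (cnt (2*(n+1)+1) (u+1) (n+2) : ℚ) = (2*n+2-u) * evenDF n := by
  rw [cnt_even_pos _ _ _ (by simp) (by omega) (by omega),
    Finset.sum_congr rfl (g := fun _ => evenDF n)]
  · obtain ⟨d, hd⟩ : ∃ d, 2*n+2 = u + d := ⟨2*n+2-u, by omega⟩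
    have : 2 * (n+1) + 1 - (u+1) = d := by omega
    simp only [Finset.sum_const, Nat.card_Ico, smul_eq_mul, this]
    have h : (2*n+2 : ℚ) = u + d := by exact_mod_cast hd
    push_cast
    rw [h]; ring
  · intro w hw
    rw [Finset.mem_Ico] at hw
    exact cnt_top n w (by omega) (by omega)

theorem cnt_sub_even (n v : ℕ) (hv : v + 1 ≤ 2*n+4) :
    (cnt (2*(n+2)) (v+1) (n+2) : ℚ) = bb (n+1) + evenDF n * ∑ u ∈ Finset.range v, (2*n+2-u : ℚ) := by
  have e : 2*(n+2) = (2*(n+1)+1)+1 := by ring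
  have ho : ¬ Even (2*(n+1)+1) := by simp
  rw [e, cnt_odd_pos _ _ _ ho (by omega) (by omega), Finset.sum_range_succ',
    cnt_even_zero _ _ (by simp)]
  push_cast
  rw [Finset.mul_sum, add_comm]
  congr 1
  · simp [bb]
  · apply Finset.sum_congr rfl
    intro u hu
    rw [Finset.mem_range] at hu
    rw [cnt_sub_odd _ _ (by omega)]; ring

theorem sum1 (c : ℚ) (v : ℕ) : ∑ u ∈ Finset.range v, (c-u : ℚ) = c*v - v*(v-1)/2 := by
  induction v with
  | zero => simp
  | succ v ih => rw [Finset.sum_range_succ, ih]; push_cast; ring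

theorem sum2 (c : ℚ) (m : ℕ) : ∑ v ∈ Finset.range m, (c*v - v*(v-1)/2 : ℚ)
    = c * (m*(m-1)/2) - m*(m-1)*(m-2)/6 := by
  induction m with
  | zero => simp
  | succ v ih => rw [Finset.sum_range_succ, ih]; push_cast; ring

theorem bb_step (n : ℕ) : (bb (n+2) : ℚ) = (2*n+4) * bb (n+1)
    + evenDF n * ((2*n+2) * ((2*n+4)*(2*n+3)/2) - (2*n+4)*(2*n+3)*(2*n+2)/6) := by
  rw [bb, Finset.sum_range_succ']
  have e : 2*(n+2) = (2*(n+1)+1)+1 := by ring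
  have hz : cnt (2*(n+2)) 0 (n+2) = 0 := by
    rw [e, cnt_odd_zero _ _ (by simp)]
  rw [hz]
  push_cast
  rw [Finset.sum_congr rfl (g := fun v : ℕ => (bb (n+1) : ℚ) + evenDF n * ((2*n+2)*v - v*(v-1)/2))]
  · rw [Finset.sum_add_distrib, ← Finset.mul_sum, sum2]
    simp only [Finset.sum_const, Finset.card_range, nsmul_eq_mul]
    push_cast
    ring
  · intro v hv
    rw [Finset.mem_range] at hv
    rw [cnt_sub_even _ _ (by omega), sum1]

theorem bb_one : bb 1 = 0 := by
  have h0 : cnt 1 0 1 = 0 := by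
    rw [cnt_even_zero 0 0 (by simp)]; simp [cnt_base]
  have h1 : cnt 1 1 1 = 0 := by
    rw [cnt_even_pos 0 1 1 (by simp) (by omega) (by omega)]; simp
  have ho : ¬ Even 1 := by simp
  simp [bb, Finset.sum_range_succ, cnt_odd_zero 1 1 ho, cnt_odd_pos 1 1 1 ho, cnt_odd_pos 1 2 1 ho, h0, h1]

theorem bb_formula (n : ℕ) : (bb (n+1) : ℚ) = (((n+1 : ℕ) : ℚ)^2 - 1) * (evenDF (n+1) : ℚ) / 3 := by
  induction n with
  | zero => simp [bb_one]
  | succ n ih =>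
    rw [bb_step, ih]
    simp only [evenDF, Finset.prod_range_succ]
    push_cast
    ring

theorem dbarStat_eq (n : ℕ) (σ : Equiv.Perm (Fin (2*n+1))) (h : DownUp σ) :
    dbarStat n σ = lr σ := by
  classical
  have hmin : ∀ i, (¬ ∃ j, j < i ∧ σ j < σ i) ↔ ∀ j, j < i → σ i < σ j := by
    intro i
    push Not
    refine forall_congr' fun j => forall_congr' fun hj => ?_
    have : σ i ≠ σ j := fun e => hj.ne' (σ.injective e)
    exact ⟨fun h => lt_of_le_of_ne h this, le_of_lt⟩
  have hpos : ∀ i, i ≠ ⟨0, by omega⟩ → (∀ j, j < i → σ i < σ j) → ∃ j, i < j ∧ σ i < σ j := by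
    intro i hi0 hi
    have hi0' : i.val ≠ 0 := fun e => hi0 (Fin.ext e)
    by_cases he : Even i.val
    · exfalso
      have h1 := h ⟨i.val - 1, by omega⟩ (by simp; omega)
      have hne : ¬ Even (i.val - 1) := by
        rw [Nat.even_iff] at he ⊢; omega
      simp only [hne, if_false] at h1
      have e : (⟨i.val - 1 + 1, by omega⟩ : Fin (2*n+1)) = i := by ext; simp; omega
      rw [e] at h1
      have := hi ⟨i.val - 1, by omega⟩ (by rw [Fin.lt_def]; exact Nat.sub_lt (Nat.pos_of_ne_zero hi0') Nat.one_pos)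
      exact absurd h1 (not_lt.2 this.le)
    · have hlt : i.val + 1 < 2*n+1 := by
        rw [Nat.even_iff] at he; omega
      have h1 := h i hlt
      simp only [he, if_false] at h1
      exact ⟨_, by rw [Fin.lt_def]; simp, h1⟩
  unfold dbarStat mmp1 lr
  rw [Set.ncard_eq_toFinset_card']
  have hM : ∀ i, Matches1 σ i ↔ (∃ j, i < j ∧ σ i < σ j) ∧ ∀ j, j < i → σ i < σ j := by
    intro i; rw [← hmin]; rfl
  split_ifs with hmax
  · rw [← Finset.card_insert_of_notMem (a := (⟨0, by omega⟩ : Fin (2*n+1)))]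
    · congr 1
      ext i
      simp only [Finset.mem_insert, Set.mem_toFinset, Set.mem_ofPred_eq, Finset.mem_filter,
        Finset.mem_univ, true_and, hM]
      constructor
      · rintro (rfl | h)
        · intro j hj; rw [Fin.lt_def] at hj; simp at hj
        · exact h.2
      · intro hi
        by_cases hi0 : i = ⟨0, by omega⟩
        · exact Or.inl hi0
        · exact Or.inr ⟨hpos i hi0 hi, hi⟩
    · simp only [Set.mem_toFinset, Set.mem_ofPred_eq]
      rintro ⟨⟨j, _, hj⟩, _⟩
      rw [Fin.lt_def] at hj
      omega
  · rw [add_zero]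
    congr 1
    ext i
    simp only [Set.mem_toFinset, Set.mem_ofPred_eq, Finset.mem_filter,
        Finset.mem_univ, true_and, hM]
    refine ⟨fun h => h.2, fun hi => ⟨?_, hi⟩⟩
    by_cases hi0 : i = ⟨0, by omega⟩
    · subst hi0
      refine ⟨σ.symm (Fin.last _), ?_, ?_⟩
      · rw [Fin.lt_def]
        apply Nat.pos_of_ne_zero
        intro h0
        apply hmax
        have : σ.symm (Fin.last (2*n)) = ⟨0, by omega⟩ := Fin.ext h0
        rw [← this]; simp
      · rw [Equiv.apply_symm_apply, Fin.lt_def, Fin.val_last]; omega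
    · exact hpos i hi0 hi

theorem stmt16 (n : ℕ) (hn : 1 ≤ n) :
    ({σ : Equiv.Perm (Fin (2*n+1)) | DownUp σ ∧ dbarStat n σ = n}.ncard : ℚ)
      = ((n : ℚ)^2 - 1) * (evenDF n : ℚ) / 3 := by
  classical
  obtain ⟨k, rfl⟩ : ∃ k, n = k + 1 := ⟨n-1, by omega⟩
  rw [← bb_formula]
  congr 1
  have := sum_cnt (2*(k+1)) (k+1) (fun _ => True)
  rw [Finset.filter_true_of_mem (s := Finset.range _) (fun _ _ => trivial)] at this
  rw [bb, ← this, Set.ncard_eq_toFinset_card']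
  congr 1
  ext σ
  simp only [Set.mem_toFinset, Set.mem_ofPred_eq, Finset.mem_filter, Finset.mem_univ, true_and,
    and_true]
  constructor
  · rintro ⟨a, b⟩; exact ⟨a, by rw [← dbarStat_eq _ _ a, b]⟩
  · rintro ⟨a, b⟩; exact ⟨a, by rw [dbarStat_eq _ _ a, b]⟩
end

section
/- For every n ≥ 2, the number of up-down permutations σ of length 2n with mmp^{(1,0,∅,0)}(σ) = 2 equals Σ_{k=1}^{n−1} C(2n−1, 2k) · b_{2k−1} · b_{2n−2k−1}, where b_{2m−1} denotes the number of up-down permutations of length 2m−1 and C(·,·) is the binomial coefficient. (Equivalently, A^{(1,0,∅,0)}_{2n}(x)|_{x²} = Σ_{k=1}^{n−1} C(2n−1,2k) B_{2k−1}(1) B_{2n−2k−1}(1).) -/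
/-- The number of up-down permutations of length `m`. -/
noncomputable def UDcount (m : ℕ) : ℕ := {σ : Equiv.Perm (Fin m) | UpDown σ}.ncard

/-- Words of length `m` with distinct letters in `S`, padded by zeros. -/
def IsWord (S : Finset ℕ) (m : ℕ) (f : ℕ → ℕ) : Prop :=
  (∀ i, m ≤ i → f i = 0) ∧ (∀ i, i < m → f i ∈ S) ∧
    (∀ i j, i < m → j < m → f i = f j → i = j)

def AltU (m : ℕ) (f : ℕ → ℕ) : Prop :=
  ∀ i, i + 1 < m → (i % 2 = 0 → f i < f (i+1)) ∧ (i % 2 = 1 → f (i+1) < f i)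

def AltD (m : ℕ) (f : ℕ → ℕ) : Prop :=
  ∀ i, i + 1 < m → (i % 2 = 0 → f (i+1) < f i) ∧ (i % 2 = 1 → f i < f (i+1))

/-- The word of a permutation, transported to the alphabet `S`. -/
noncomputable def wordOf (S : Finset ℕ) (m : ℕ) (hS : S.card = m) (σ : Equiv.Perm (Fin m)) :
    ℕ → ℕ := fun i => if h : i < m then S.orderEmbOfFin hS (σ ⟨i, h⟩) else 0

lemma wordOf_lt {S : Finset ℕ} {m : ℕ} (hS : S.card = m) (σ : Equiv.Perm (Fin m))
    {i j : ℕ} (hi : i < m) (hj : j < m) :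
    wordOf S m hS σ i < wordOf S m hS σ j ↔ σ ⟨i, hi⟩ < σ ⟨j, hj⟩ := by
  simp [wordOf, hi, hj]

lemma wordOf_le {S : Finset ℕ} {m : ℕ} (hS : S.card = m) (σ : Equiv.Perm (Fin m))
    {i j : ℕ} (hi : i < m) (hj : j < m) :
    wordOf S m hS σ i ≤ wordOf S m hS σ j ↔ σ ⟨i, hi⟩ ≤ σ ⟨j, hj⟩ := by
  simp [wordOf, hi, hj]

lemma wordOf_isWord {S : Finset ℕ} {m : ℕ} (hS : S.card = m) (σ : Equiv.Perm (Fin m)) :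
    IsWord S m (wordOf S m hS σ) := by
  refine ⟨fun i hi => ?_, fun i hi => ?_, fun i j hi hj h => ?_⟩
  · simp [wordOf, not_lt.mpr hi]
  · simp [wordOf, hi]
  · simpa [wordOf, hi, hj] using h

lemma wordOf_inj {S : Finset ℕ} {m : ℕ} (hS : S.card = m) :
    Function.Injective (wordOf S m hS) := by
  intro σ τ h
  ext i
  have := congrFun h i.val
  simp [wordOf] at this
  rw [this]

lemma wordOf_surj {S : Finset ℕ} {m : ℕ} (hS : S.card = m) (f : ℕ → ℕ) (hf : IsWord S m f) :
    ∃ σ, wordOf S m hS σ = f := by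
  obtain ⟨h0, h1, h2⟩ := hf
  let g : Fin m → Fin m := fun i => (S.orderIsoOfFin hS).symm ⟨f i, h1 i i.2⟩
  have hg : Function.Injective g := by
    intro i j hij
    have := (S.orderIsoOfFin hS).symm.injective hij
    ext
    exact h2 i j i.2 j.2 (by simpa using this)
  refine ⟨Equiv.ofBijective g (Finite.injective_iff_bijective.mp hg), ?_⟩
  funext i
  by_cases hi : i < m
  · simp only [wordOf, hi, dif_pos, Equiv.ofBijective_apply, g]
    rw [← Finset.coe_orderIsoOfFin_apply]
    simp
  · simp [wordOf, hi, h0 i (not_lt.mp hi)]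

lemma ncard_words {S : Finset ℕ} {m : ℕ} (hS : S.card = m) (P : (ℕ → ℕ) → Prop) :
    {σ : Equiv.Perm (Fin m) | P (wordOf S m hS σ)}.ncard = {f | IsWord S m f ∧ P f}.ncard := by
  rw [← Set.ncard_image_of_injective _ (wordOf_inj hS)]
  congr 1
  ext f
  simp only [Set.mem_image, Set.mem_ofPred_eq]
  constructor
  · rintro ⟨σ, h, rfl⟩
    exact ⟨wordOf_isWord hS σ, h⟩
  · rintro ⟨h, hP⟩
    obtain ⟨σ, rfl⟩ := wordOf_surj hS f h
    exact ⟨σ, hP, rfl⟩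

lemma finite_words {S : Finset ℕ} {m : ℕ} (hS : S.card = m) (P : (ℕ → ℕ) → Prop) :
    {f | IsWord S m f ∧ P f}.Finite := by
  apply (Set.finite_range (wordOf S m hS)).subset
  rintro f ⟨h, -⟩
  exact wordOf_surj hS f h

lemma upDown_iff {S : Finset ℕ} {m : ℕ} (hS : S.card = m) (σ : Equiv.Perm (Fin m)) :
    UpDown σ ↔ AltU m (wordOf S m hS σ) := by
  constructor
  · intro h i hi
    have := h ⟨i, by omega⟩ hi
    rw [wordOf_lt hS σ (by omega) hi, wordOf_lt hS σ hi (by omega)]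
    simp only [Nat.even_iff] at this
    split_ifs at this with h1
    · exact ⟨fun _ => this, fun _ => by omega⟩
    · exact ⟨fun _ => by omega, fun _ => this⟩
  · intro h i hi
    have := h i hi
    rw [wordOf_lt hS σ (by omega) hi, wordOf_lt hS σ hi (by omega)] at this
    simp only [Nat.even_iff]
    split_ifs with h1
    · exact this.1 h1
    · exact this.2 (by omega)

lemma downUp_iff {S : Finset ℕ} {m : ℕ} (hS : S.card = m) (σ : Equiv.Perm (Fin m)) :
    DownUp σ ↔ AltD m (wordOf S m hS σ) := by
  constructor
  · intro h i hi
    have := h ⟨i, by omega⟩ hi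
    rw [wordOf_lt hS σ (by omega) hi, wordOf_lt hS σ hi (by omega)]
    simp only [Nat.even_iff] at this
    split_ifs at this with h1
    · exact ⟨fun _ => this, fun _ => by omega⟩
    · exact ⟨fun _ => by omega, fun _ => this⟩
  · intro h i hi
    have := h i hi
    rw [wordOf_lt hS σ (by omega) hi, wordOf_lt hS σ hi (by omega)] at this
    simp only [Nat.even_iff]
    split_ifs with h1
    · exact this.1 h1
    · exact this.2 (by omega)

lemma UDcount_eq (m : ℕ) : UDcount m = {σ : Equiv.Perm (Fin m) | DownUp σ}.ncard := by
  unfold UDcount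
  rw [← Set.ncard_image_of_injective _ (mul_right_injective (Fin.revPerm : Equiv.Perm (Fin m)))]
  congr 1
  ext τ
  simp only [Set.mem_image, Set.mem_ofPred_eq]
  constructor
  · rintro ⟨σ, h, rfl⟩ i hi
    simpa using h i hi
  · intro h
    refine ⟨Fin.revPerm * τ, fun i hi => ?_, ?_⟩
    · simpa using h i hi
    · ext i; simp

lemma ncard_W {S : Finset ℕ} {m : ℕ} (hS : S.card = m) :
    {f | IsWord S m f ∧ AltD m f}.ncard = UDcount m := by
  rw [UDcount_eq, ← ncard_words hS]
  simp only [downUp_iff hS]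

/-- structural condition -/
def Struct (n k : ℕ) (f : ℕ → ℕ) : Prop :=
  (∀ i, i < 2*n → f (2*k) ≤ f i) ∧ ∀ i, i < 2*k → f 0 ≤ f i

lemma matches_iff {n : ℕ} (σ : Equiv.Perm (Fin (2*n))) (h : UpDown σ) (i : Fin (2*n)) :
    Matches1 σ i ↔ (∀ j, j < i → σ i ≤ σ j) ∧ i.val % 2 = 0 := by
  constructor
  · rintro ⟨-, h2⟩
    push Not at h2
    refine ⟨h2, ?_⟩
    by_contra hi
    have h3 := h ⟨i.val - 1, by omega⟩ (by simp; omega)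
    have h4 : Even (i.val - 1) := by rw [Nat.even_iff]; omega
    have h5 : (⟨i.val - 1 + 1, by omega⟩ : Fin (2*n)) = i := by ext; simp; omega
    simp only [h4, if_true, h5] at h3
    have := h2 ⟨i.val - 1, by omega⟩ (by rw [Fin.lt_def]; simp; omega)
    exact absurd h3 (not_lt.mpr this)
  · rintro ⟨h1, h2⟩
    refine ⟨?_, by push Not; exact h1⟩
    have := h i (by omega)
    rw [if_pos (Nat.even_iff.mpr h2)] at this
    exact ⟨_, by rw [Fin.lt_def]; simp, this⟩

lemma lrmin_even {n : ℕ} (σ : Equiv.Perm (Fin (2*n))) (h : UpDown σ) (i : Fin (2*n))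
    (h2 : ∀ j, j < i → σ i ≤ σ j) : i.val % 2 = 0 := by
  by_contra hi
  have h3 := h ⟨i.val - 1, by omega⟩ (by simp; omega)
  have h4 : Even (i.val - 1) := by rw [Nat.even_iff]; omega
  have h5 : (⟨i.val - 1 + 1, by omega⟩ : Fin (2*n)) = i := by ext; simp; omega
  simp only [h4, if_true, h5] at h3
  have := h2 ⟨i.val - 1, by omega⟩ (by rw [Fin.lt_def]; simp; omega)
  exact absurd h3 (not_lt.mpr this)

lemma mmp_iff {n : ℕ} (hn : 2 ≤ n) (σ : Equiv.Perm (Fin (2*n))) (h : UpDown σ)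
    {S : Finset ℕ} (hS : S.card = 2*n) :
    mmp1 σ = 2 ↔ ∃ k ∈ Finset.Icc 1 (n-1), Struct n k (wordOf S (2*n) hS σ) := by
  have hset : {i | Matches1 σ i} = {i | ∀ j, j < i → σ i ≤ σ j} := by
    ext i
    simp only [Set.mem_ofPred_eq, matches_iff σ h]
    exact ⟨fun h => h.1, fun h1 => ⟨h1, lrmin_even σ h i h1⟩⟩
  unfold mmp1
  rw [hset]
  let z : Fin (2*n) := ⟨0, by omega⟩
  have hz : z ∈ {i | ∀ j, j < i → σ i ≤ σ j} := by
    intro j hj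
    rw [Fin.lt_def] at hj
    simp [z] at hj
  constructor
  · intro hc
    let p : Fin (2*n) := σ.symm z
    have hp : ∀ j, σ p ≤ σ j := by
      intro j
      simp [p, z, Fin.le_def]
    have hpm : p ∈ {i | ∀ j, j < i → σ i ≤ σ j} := fun j _ => hp j
    have hpz : p ≠ z := by
      intro hpz
      have : {i | ∀ j, j < i → σ i ≤ σ j} = {z} := by
        ext i
        constructor
        · intro hi
          by_contra hne
          have hlt : z < i := by
            rw [Fin.lt_def]
            have : i.val ≠ 0 := fun h0 => hne (Fin.ext h0)
            simp [z]; omega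
          have h1 := hi z hlt
          have h2 := hp i
          rw [hpz] at h2
          exact hne (σ.injective (le_antisymm h1 h2))
        · rintro rfl
          exact hz
      rw [this, Set.ncard_singleton] at hc
      omega
    have hset2 : ({z, p} : Set (Fin (2*n))) = {i | ∀ j, j < i → σ i ≤ σ j} := by
      apply Set.eq_of_subset_of_ncard_le
      · rintro x (rfl | rfl)
        · exact hz
        · exact hpm
      · rw [hc, Set.ncard_pair hpz.symm]
      · exact Set.toFinite _
    have hpe := lrmin_even σ h p hpm
    have hp0 : p.val ≠ 0 := fun h0 => hpz (Fin.ext h0)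
    have hp2 := p.2
    refine ⟨p.val / 2, by rw [Finset.mem_Icc]; omega, ?_, ?_⟩
    · intro i hi
      rw [wordOf_le hS σ (by omega) hi]
      have : (⟨2 * (p.val / 2), by omega⟩ : Fin (2*n)) = p := by ext; simp; omega
      rw [this]
      exact hp _
    · intro i hi
      rw [wordOf_le hS σ (by omega) (by omega)]
      obtain ⟨j, hj, hjm⟩ := Finset.exists_min_image (Finset.Iic (⟨i, by omega⟩ : Fin (2*n))) σ
        ⟨_, Finset.mem_Iic.mpr le_rfl⟩
      rw [Finset.mem_Iic] at hj
      have hjl : j ∈ {i | ∀ j, j < i → σ i ≤ σ j} := by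
        intro l hl
        exact hjm l (Finset.mem_Iic.mpr (hl.le.trans hj))
      rw [← hset2] at hjl
      have := hjm ⟨i, by omega⟩ (Finset.mem_Iic.mpr le_rfl)
      rcases hjl with rfl | rfl
      · exact this
      · rw [Fin.le_def] at hj
        simp only at hj
        omega
  · rintro ⟨k, hk, h1, h2⟩
    rw [Finset.mem_Icc] at hk
    let p : Fin (2*n) := ⟨2*k, by omega⟩
    have hp : ∀ j, σ p ≤ σ j := fun j => (wordOf_le hS σ (by omega) j.2).mp (h1 j j.2)
    have hpz : z ≠ p := by
      intro h
      have := congrArg Fin.val h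
      simp [z, p] at this
      omega
    have : {i | ∀ j, j < i → σ i ≤ σ j} = {z, p} := by
      ext i
      constructor
      · intro hi
        by_contra hne
        simp only [Set.mem_insert_iff, Set.mem_singleton_iff, not_or] at hne
        rcases lt_or_ge i p with hlt | hge
        · have hlt' : i.val < 2*k := hlt
          have h3 : σ z ≤ σ i := (wordOf_le hS σ (by omega) i.2).mp (h2 i hlt')
          have hlt : z < i := by
            rw [Fin.lt_def]
            have : i.val ≠ 0 := fun h0 => hne.1 (Fin.ext h0)
            simp [z]; omega
          exact hne.1 (σ.injective (le_antisymm (hi z hlt) h3))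
        · have hlt : p < i := lt_of_le_of_ne hge (Ne.symm hne.2)
          exact hne.2 (σ.injective (le_antisymm (hi p hlt) (hp i)))
      · rintro (rfl | rfl)
        · exact hz
        · exact fun j _ => hp j
    rw [this, Set.ncard_pair hpz]

/-- the block of words with given `k` and given set of initial letters. -/
def Blk (n k : ℕ) (S : Finset ℕ) : Set (ℕ → ℕ) :=
  {f | IsWord (Finset.range (2*n)) (2*n) f ∧ AltU (2*n) f ∧ Struct n k f ∧ ∀ i, i < 2*k → f i ∈ S}

lemma word_surj {S : Finset ℕ} {m : ℕ} (hS : S.card = m) {f : ℕ → ℕ}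
    (h1 : ∀ i, i < m → f i ∈ S) (h2 : ∀ i j, i < m → j < m → f i = f j → i = j)
    {x : ℕ} (hx : x ∈ S) : ∃ i, i < m ∧ f i = x := by
  have : (Finset.range m).image f = S := by
    apply Finset.eq_of_subset_of_card_le
    · intro y hy
      simp only [Finset.mem_image, Finset.mem_range] at hy
      obtain ⟨i, hi, rfl⟩ := hy
      exact h1 i hi
    · rw [Finset.card_image_of_injOn, Finset.card_range, hS]
      intro i hi j hj hij
      simp only [Finset.coe_range, Set.mem_Iio] at hi hj
      exact h2 i j hi hj hij
  rw [← this] at hx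
  simpa using hx

lemma struct_zero {n k : ℕ} (hkn : k < n) {f : ℕ → ℕ}
    (hf : IsWord (Finset.range (2*n)) (2*n) f) (hs : Struct n k f) : f (2*k) = 0 := by
  obtain ⟨i, hi, h0⟩ := word_surj (Finset.card_range (2*n)) hf.2.1 hf.2.2
    (x := 0) (by simp; omega)
  have := hs.1 i hi
  omega

def fwd1 (k : ℕ) (f : ℕ → ℕ) : ℕ → ℕ := fun i => if i < 2*k-1 then f (i+1) else 0
def fwd2 (n k : ℕ) (f : ℕ → ℕ) : ℕ → ℕ :=
  fun i => if i < 2*n-2*k-1 then f (i+2*k+1) else 0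
def bwd (k a : ℕ) (g h : ℕ → ℕ) : ℕ → ℕ := fun i =>
  if i = 0 then a else if i < 2*k then g (i-1) else if i = 2*k then 0 else h (i-2*k-1)

lemma ncard_Blk {n k : ℕ} (hk : 1 ≤ k) (hkn : k < n) (S : Finset ℕ)
    (hSs : S ⊆ Finset.Icc 1 (2*n-1)) (hSc : S.card = 2*k) :
    (Blk n k S).ncard = UDcount (2*k-1) * UDcount (2*n-2*k-1) := by
  have hne : S.Nonempty := by rw [← Finset.card_pos]; omega
  obtain ⟨a, haS, ham⟩ : ∃ a ∈ S, ∀ x ∈ S, a ≤ x :=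
    ⟨S.min' hne, S.min'_mem hne, fun x hx => S.min'_le x hx⟩
  have hSp : ∀ x ∈ S, 1 ≤ x ∧ x ≤ 2*n-1 := fun x hx => Finset.mem_Icc.mp (hSs hx)
  have hA : (S.erase a).card = 2*k-1 := by rw [Finset.card_erase_of_mem haS, hSc]
  have hB : (Finset.Icc 1 (2*n-1) \ S).card = 2*n-2*k-1 := by
    rw [Finset.card_sdiff_of_subset hSs, hSc]; simp; omega
  rw [← ncard_W hA, ← ncard_W hB, ← Set.ncard_prod]
  refine Set.ncard_congr (fun f _ => (fwd1 k f, fwd2 n k f)) ?_ ?_ ?_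
  · rintro f ⟨hf, hu, hs, hi⟩
    have hz := struct_zero hkn hf hs
    obtain ⟨hf0, hf1, hf2⟩ := hf
    have hsur : ∀ x ∈ S, ∃ i, i < 2*k ∧ f i = x := fun x hx => word_surj hSc hi
      (fun i j hi hj => hf2 i j (by omega) (by omega)) hx
    have ha : f 0 = a := by
      obtain ⟨i, hi1, hi2⟩ := hsur a haS
      have := hs.2 i hi1
      have := ham _ (hi 0 (by omega))
      omega
    refine ⟨⟨⟨?_, ?_, ?_⟩, ?_⟩, ⟨?_, ?_, ?_⟩, ?_⟩
    · intro i hi; simp only [fwd1]; rw [if_neg (by omega)]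
    · intro i hi'; simp only [fwd1]; rw [if_pos hi', Finset.mem_erase]
      refine ⟨fun h => ?_, hi _ (by omega)⟩
      have := hf2 (i+1) 0 (by omega) (by omega) (by omega)
      omega
    · intro i j hi hj; simp only [fwd1]; rw [if_pos hi, if_pos hj]
      intro h
      have := hf2 _ _ (by omega) (by omega) h
      omega
    · intro i hi'; simp only [fwd1]; rw [if_pos hi', if_pos (by omega)]
      have := hu (i+1) (by omega)
      exact ⟨fun h => this.2 (by omega), fun h => this.1 (by omega)⟩
    · intro i hi; simp only [fwd2]; rw [if_neg (by omega)]
    · intro i hi'; simp only [fwd2]; rw [if_pos hi', Finset.mem_sdiff, Finset.mem_Icc]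
      have h1 := Finset.mem_range.mp (hf1 (i+2*k+1) (by omega))
      refine ⟨⟨?_, by omega⟩, ?_⟩
      · by_contra h
        have := hf2 (i+2*k+1) (2*k) (by omega) (by omega) (by omega)
        omega
      · intro h
        obtain ⟨j, hj1, hj2⟩ := hsur _ h
        have := hf2 _ _ (by omega) (by omega) hj2
        omega
    · intro i j hi hj; simp only [fwd2]; rw [if_pos hi, if_pos hj]
      intro h
      have := hf2 _ _ (by omega) (by omega) h
      omega
    · intro i hi'; simp only [fwd2]; rw [if_pos hi', if_pos (by omega)]
      have := hu (i+2*k+1) (by omega)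
      rw [show i + 1 + 2*k + 1 = i + 2*k+1+1 by ring]
      exact ⟨fun h => this.2 (by omega), fun h => this.1 (by omega)⟩
  · rintro f f' ⟨hf, hu, hs, hi⟩ ⟨hf', hu', hs', hi'⟩ he
    have key : ∀ f, IsWord (Finset.range (2*n)) (2*n) f → Struct n k f →
        (∀ i, i < 2*k → f i ∈ S) → f = bwd k a (fwd1 k f) (fwd2 n k f) := by
      intro f hf hs hi
      have hz := struct_zero hkn hf hs
      obtain ⟨hf0, hf1, hf2⟩ := hf
      have hsur : ∀ x ∈ S, ∃ i, i < 2*k ∧ f i = x := fun x hx => word_surj hSc hi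
        (fun i j hi hj => hf2 i j (by omega) (by omega)) hx
      have ha : f 0 = a := by
        obtain ⟨i, hi1, hi2⟩ := hsur a haS
        have := hs.2 i hi1
        have := ham _ (hi 0 (by omega))
        omega
      funext i
      simp only [bwd, fwd1, fwd2]
      split_ifs with h1 h2 h3 h4 h5
      · rw [h1, ha]
      · congr 1; omega
      · omega
      · rw [h4, hz]
      · congr 1; omega
      · exact hf0 _ (by omega)
    rw [Prod.mk.injEq] at he
    rw [key f hf hs hi, key f' hf' hs' hi', he.1, he.2]
  · rintro ⟨g, h⟩ ⟨⟨⟨hg0, hg1, hg2⟩, hga⟩, ⟨hh0, hh1, hh2⟩, hha⟩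
    simp only at hg0 hg1 hg2 hga hh0 hh1 hh2 hha
    have hg1a : ∀ i, i < 2*k-1 → g i ≠ a := fun i hi => (Finset.mem_erase.mp (hg1 i hi)).1
    have hg1S : ∀ i, i < 2*k-1 → g i ∈ S := fun i hi => (Finset.mem_erase.mp (hg1 i hi)).2
    have hh1r : ∀ i, i < 2*n-2*k-1 → 1 ≤ h i ∧ h i ≤ 2*n-1 := fun i hi =>
      Finset.mem_Icc.mp (Finset.mem_sdiff.mp (hh1 i hi)).1
    have hh1S : ∀ i, i < 2*n-2*k-1 → h i ∉ S := fun i hi => (Finset.mem_sdiff.mp (hh1 i hi)).2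
    -- evaluation of the glued word
    have e0 : bwd k a g h 0 = a := by simp [bwd]
    have e1 : ∀ i, 1 ≤ i → i < 2*k → bwd k a g h i = g (i-1) := by
      intro i h1 h2; simp only [bwd]; rw [if_neg (by omega), if_pos h2]
    have e2 : bwd k a g h (2*k) = 0 := by
      simp only [bwd]; rw [if_neg (by omega), if_neg (by omega)]; simp
    have e3 : ∀ i, 2*k < i → bwd k a g h i = h (i-2*k-1) := by
      intro i h1; simp only [bwd]; rw [if_neg (by omega), if_neg (by omega), if_neg (by omega)]
    have eS : ∀ i, i < 2*k → bwd k a g h i ∈ S := by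
      intro i hi
      rcases Nat.eq_zero_or_pos i with rfl | hp
      · rw [e0]; exact haS
      · rw [e1 i hp hi]; exact hg1S _ (by omega)
    have eT : ∀ i, 2*k < i → i < 2*n → (1 ≤ bwd k a g h i ∧ bwd k a g h i ≤ 2*n-1) ∧
        bwd k a g h i ∉ S := by
      intro i h1 h2
      rw [e3 i h1]
      exact ⟨hh1r _ (by omega), hh1S _ (by omega)⟩
    refine ⟨bwd k a g h, ⟨⟨?_, ?_, ?_⟩, ?_, ⟨?_, ?_⟩, eS⟩, ?_⟩
    · intro i hi
      rw [e3 i (by omega)]; exact hh0 _ (by omega)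
    · intro i hi
      rw [Finset.mem_range]
      rcases lt_trichotomy i (2*k) with hl | rfl | hl
      · have := hSp _ (eS i hl); omega
      · rw [e2]; omega
      · have := eT i hl hi; omega
    · have hlt : ∀ i j, i < j → j < 2*n → bwd k a g h i ≠ bwd k a g h j := by
        intro i j hij hj he
        rcases lt_trichotomy j (2*k) with hl | rfl | hl
        · rcases Nat.eq_zero_or_pos i with rfl | hp
          · rw [e0, e1 j (by omega) hl] at he
            exact hg1a _ (by omega) he.symm
          · rw [e1 i hp (by omega), e1 j (by omega) hl] at he
            have := hg2 _ _ (by omega) (by omega) he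
            omega
        · have := hSp _ (eS i hij); omega
        · rcases lt_trichotomy i (2*k) with hl' | rfl | hl'
          · have h1 := eS i hl'
            rw [he] at h1
            exact (eT j hl hj).2 h1
          · have := eT j hl hj; omega
          · rw [e3 i hl', e3 j hl] at he
            have := hh2 _ _ (by omega) (by omega) he
            omega
      intro i j hi hj he
      rcases lt_trichotomy i j with hl | hl | hl
      · exact absurd he (hlt i j hl hj)
      · exact hl
      · exact absurd he.symm (hlt j i hl hi)
    · intro i hi
      rcases Nat.eq_zero_or_pos i with rfl | hp
      · refine ⟨fun _ => ?_, fun _ => by omega⟩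
        rw [e0, e1 _ (by omega) (by omega)]
        have h1 := hg1a 0 (by omega)
        have h2 := ham _ (hg1S 0 (by omega))
        simp only [zero_add, Nat.sub_self]
        omega
      · rcases lt_trichotomy (i+1) (2*k) with hl | hl | hl
        · rw [e1 i hp (by omega), e1 (i+1) (by omega) hl]
          have := hga (i-1) (by omega)
          rw [show i + 1 - 1 = i - 1 + 1 by omega]
          exact ⟨fun h => this.2 (by omega), fun h => this.1 (by omega)⟩
        · have := hSp _ (eS i (by omega))
          rw [hl, e2]
          exact ⟨fun h => by omega, fun h => by omega⟩
        · rcases Nat.lt_or_ge (2*k) i with hl' | hl'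
          · rw [e3 i hl', e3 (i+1) hl]
            have := hha (i-2*k-1) (by omega)
            rw [show i + 1 - 2*k - 1 = i - 2*k - 1 + 1 by omega]
            exact ⟨fun h => this.2 (by omega), fun h => this.1 (by omega)⟩
          · obtain rfl : i = 2*k := by omega
            have := eT _ hl hi
            rw [e2]
            exact ⟨fun h => by omega, fun h => by omega⟩
    · intro i hi
      rw [e2]; omega
    · intro i hi
      rw [e0]; exact ham _ (eS i hi)
    · rw [Prod.mk.injEq]
      constructor
      · funext i
        simp only [fwd1]
        split_ifs with hi
        · rw [e1 _ (by omega) (by omega)]; rfl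
        · exact (hg0 i (by omega)).symm
      · funext i
        simp only [fwd2]
        split_ifs with hi
        · rw [e3 _ (by omega)]; congr 1; omega
        · exact (hh0 i (by omega)).symm

theorem stmt17 (n : ℕ) (hn : 2 ≤ n) :
    {σ : Equiv.Perm (Fin (2*n)) | UpDown σ ∧ mmp1 σ = 2}.ncard
      = ∑ k ∈ Finset.Icc 1 (n-1),
          (2*n - 1).choose (2*k) * UDcount (2*k - 1) * UDcount (2*n - 2*k - 1) := by
  classical
  have hR := Finset.card_range (2*n)
  have hfin : ∀ k S, (Blk n k S).Finite := fun k S => finite_words hR _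
  have h1 : {σ : Equiv.Perm (Fin (2*n)) | UpDown σ ∧ mmp1 σ = 2} =
      {σ | (fun f => AltU (2*n) f ∧ ∃ k ∈ Finset.Icc 1 (n-1), Struct n k f)
        (wordOf (Finset.range (2*n)) (2*n) hR σ)} := by
    ext σ
    simp only [Set.mem_ofPred_eq]
    rw [← upDown_iff hR]
    exact and_congr_right fun h => mmp_iff hn σ h hR
  rw [h1, ncard_words hR (fun f => AltU (2*n) f ∧ ∃ k ∈ Finset.Icc 1 (n-1), Struct n k f)]
  have h2 : {f | IsWord (Finset.range (2*n)) (2*n) f ∧ AltU (2*n) f ∧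
      ∃ k ∈ Finset.Icc 1 (n-1), Struct n k f} =
      (((Finset.Icc 1 (n-1)).biUnion fun k =>
        (Finset.powersetCard (2*k) (Finset.Icc 1 (2*n-1))).biUnion fun S =>
          (hfin k S).toFinset : Finset (ℕ → ℕ)) : Set (ℕ → ℕ)) := by
    ext f
    simp only [Finset.coe_biUnion, Set.mem_iUnion, Finset.mem_coe, Set.Finite.mem_toFinset,
      Set.Finite.coe_toFinset, exists_prop, Set.mem_ofPred_eq]
    constructor
    · rintro ⟨hf, hu, k, hk, hs⟩
      have hk' := Finset.mem_Icc.mp hk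
      have hz := struct_zero (by omega) hf hs
      refine ⟨k, hk, (Finset.range (2*k)).image f, ?_, hf, hu, hs, fun i hi =>
        Finset.mem_image_of_mem _ (Finset.mem_range.mpr hi)⟩
      rw [Finset.mem_powersetCard]
      constructor
      · intro x hx
        simp only [Finset.mem_image, Finset.mem_range] at hx
        obtain ⟨i, hi, rfl⟩ := hx
        have h3 := Finset.mem_range.mp (hf.2.1 i (by omega))
        rw [Finset.mem_Icc]
        refine ⟨?_, by omega⟩
        by_contra h
        have := hf.2.2 i (2*k) (by omega) (by omega) (by omega)
        omega
      · rw [Finset.card_image_of_injOn, Finset.card_range]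
        intro i hi j hj hij
        simp only [Finset.coe_range, Set.mem_Iio] at hi hj
        exact hf.2.2 i j (by omega) (by omega) hij
    · rintro ⟨k, hk, S, hS, hf, hu, hs, hi⟩
      exact ⟨hf, hu, k, hk, hs⟩
  rw [h2, Set.ncard_coe_finset, Finset.card_biUnion]
  · refine Finset.sum_congr rfl fun k hk => ?_
    have hk' := Finset.mem_Icc.mp hk
    rw [Finset.card_biUnion]
    · have : ∀ S ∈ Finset.powersetCard (2*k) (Finset.Icc 1 (2*n-1)),
          (hfin k S).toFinset.card = UDcount (2*k-1) * UDcount (2*n-2*k-1) := by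
        intro S hS
        rw [Finset.mem_powersetCard] at hS
        rw [← Set.ncard_eq_toFinset_card _ (hfin k S), ncard_Blk hk'.1 (by omega) S hS.1 hS.2]
      rw [Finset.sum_congr rfl this, Finset.sum_const, Finset.card_powersetCard]
      simp [mul_assoc]
    · intro S hS T hT hne
      rw [Finset.mem_coe, Finset.mem_powersetCard] at hS hT
      simp only [Function.onFun]
      rw [Finset.disjoint_left]
      intro f hf hf'
      rw [Set.Finite.mem_toFinset] at hf hf'
      apply hne
      obtain ⟨hw, -, -, hi⟩ := hf
      obtain ⟨-, -, -, hi'⟩ := hf'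
      have hinj : ∀ i j, i < 2*k → j < 2*k → f i = f j → i = j :=
        fun i j hi hj => hw.2.2 i j (by omega) (by omega)
      ext x
      constructor
      · intro hx
        obtain ⟨i, h3, rfl⟩ := word_surj hS.2 hi hinj hx
        exact hi' i h3
      · intro hx
        obtain ⟨i, h3, rfl⟩ := word_surj hT.2 hi' hinj hx
        exact hi i h3
  · intro k hk l hl hne
    simp only [Finset.mem_coe, Finset.mem_Icc] at hk hl
    simp only [Function.onFun]
    rw [Finset.disjoint_left]
    intro f hf hf'
    simp only [Finset.mem_biUnion, Set.Finite.mem_toFinset] at hf hf'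
    obtain ⟨S, -, hw, -, hs, -⟩ := hf
    obtain ⟨T, -, -, -, hs', -⟩ := hf'
    have e1 := struct_zero (by omega) hw hs
    have e2 := struct_zero (by omega) hw hs'
    have := hw.2.2 (2*k) (2*l) (by omega) (by omega) (by omega)
    omega
end

section
/- For every n ≥ 2, the number of down-up permutations σ of length 2n+1 with mmp^{(1,0,∅,0)}(σ) = 2 equals (2n−1)·b_{2n−1} + Σ_{k=2}^{n} C(2n−1, 2k−2) · b_{2k−3} · b_{2n−2k+1}, where b_{2m−1} denotes the number of up-down permutations of length 2m−1 (with b_1 = 1) and C(·,·) is the binomial coefficient. (Equivalently, D^{(1,0,∅,0)}_{2n+1}(x)|_{x²} = (2n−1)B_{2n−1}(1) + Σ_{k=2}^{n} C(2n−1,2k−2) B_{2k−3}(1) B_{2n−2k+1}(1).) -/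
open Finset

/-- Alternating lists; `true` means the first step goes up. -/
def AltL : Bool → List ℕ → Prop
  | _, [] => True
  | _, [_] => True
  | b, x :: y :: t => (if b = true then x < y else y < x) ∧ AltL (!b) (y :: t)

theorem altL_iff (l : List ℕ) : ∀ b : Bool, AltL b l ↔ ∀ i, ∀ h : i + 1 < l.length,
    if (Even i ↔ b = true) then l[i] < l[i+1] else l[i+1] < l[i] := by
  induction l with
  | nil => intro b; simp [AltL]
  | cons x t ih =>
    intro b
    cases t with
    | nil => simp [AltL]
    | cons y t =>
      rw [AltL, ih]
      constructor
      · rintro ⟨h1, h2⟩ i hi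
        cases i with
        | zero => cases b <;> simpa using h1
        | succ i =>
          have := h2 i (by simpa using hi)
          cases b <;> simpa [Nat.even_add_one] using this
      · intro h
        refine ⟨?_, fun i hi => ?_⟩
        · have := h 0 (by simp)
          cases b <;> simpa using this
        · have := h (i+1) (by simpa using hi)
          cases b <;> simpa [Nat.even_add_one] using this

theorem altL_map (f : ℕ → ℕ) (l : List ℕ) (hf : ∀ x ∈ l, ∀ y ∈ l, (x < y ↔ f x < f y)) :
    ∀ b, AltL b (l.map f) ↔ AltL b l := by
  intro b
  simp only [altL_iff, List.length_map, List.getElem_map]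
  refine forall_congr' fun i => forall_congr' fun h => ?_
  rw [← hf _ (List.getElem_mem _) _ (List.getElem_mem _),
    ← hf _ (List.getElem_mem _) _ (List.getElem_mem _)]

theorem altL_map_anti (f : ℕ → ℕ) (l : List ℕ) (hf : ∀ x ∈ l, ∀ y ∈ l, (x < y ↔ f y < f x)) :
    ∀ b, AltL (!b) (l.map f) ↔ AltL b l := by
  intro b
  simp only [altL_iff, List.length_map, List.getElem_map]
  refine forall_congr' fun i => forall_congr' fun h => ?_
  rw [← hf _ (List.getElem_mem _) _ (List.getElem_mem _),
    ← hf _ (List.getElem_mem _) _ (List.getElem_mem _)]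
  cases b <;> by_cases h : Even i <;> simp [h]

theorem altL_cons_up (m : ℕ) (t : List ℕ) (h : ∀ x ∈ t, m < x) :
    AltL true (m :: t) ↔ AltL false t := by
  cases t with
  | nil => simp [AltL]
  | cons y t => simp [AltL, h y]

theorem altL_append (l2 : List ℕ) (h2 : ∀ x ∈ l2, 0 < x) : ∀ (l1 : List ℕ) (b : Bool),
    (b = true ↔ Even l1.length) → (∀ x ∈ l1, 0 < x) →
    (AltL b (l1 ++ 0 :: l2) ↔ AltL b l1 ∧ AltL false l2)
  | [], b, hb, h1 => by
      have : b = true := by simpa using hb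
      subst this
      simp [altL_cons_up 0 l2 h2, AltL]
  | [x], b, hb, h1 => by
      have : b = false := by simpa using hb
      subst this
      have := h1 x (by simp)
      simp [altL_cons_up 0 l2 h2, AltL, this]
  | x :: y :: t, b, hb, h1 => by
      have ih := altL_append l2 h2 (y :: t) (!b)
        (by cases b <;> simp [Nat.even_add_one] at hb ⊢ <;> simpa using hb)
        (fun z hz => h1 z (List.mem_cons_of_mem _ hz))
      simp only [List.cons_append, AltL] at ih ⊢
      rw [ih]; tauto

/-- All orderings of `S`. -/
noncomputable def ords (S : Finset ℕ) : Finset (List ℕ) := S.toList.permutations.toFinset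

open Classical in
/-- Alternating orderings of `S`. -/
noncomputable def altSet (b : Bool) (S : Finset ℕ) : Finset (List ℕ) :=
  (ords S).filter (AltL b)

theorem mem_lists' (S : Finset ℕ) (l : List ℕ) :
    l ∈ ords S ↔ l.Nodup ∧ ∀ x, x ∈ l ↔ x ∈ S := by
  have hp : l ∈ ords S ↔ S.val = (l : Multiset ℕ) := by
    rw [ords, List.mem_toFinset, List.mem_permutations, ← Multiset.coe_eq_coe, Finset.coe_toList]
    exact eq_comm
  rw [hp]
  constructor
  · intro h
    refine ⟨?_, fun x => ?_⟩
    · have := S.nodup; rw [h] at this; simpa using this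
    · rw [← Finset.mem_val, h]; simp
  · rintro ⟨h1, h2⟩
    refine (Multiset.Nodup.ext S.nodup (by simpa using h1)).2 fun x => ?_
    simp [h2]

theorem mem_altSet (b : Bool) (S : Finset ℕ) (l : List ℕ) :
    l ∈ altSet b S ↔ (l.Nodup ∧ ∀ x, x ∈ l ↔ x ∈ S) ∧ AltL b l := by
  classical
  rw [altSet, Finset.mem_filter, mem_lists']

theorem length_of_mem {S : Finset ℕ} {l : List ℕ} (h : l.Nodup) (h2 : ∀ x, x ∈ l ↔ x ∈ S) :
    l.length = S.card := by
  rw [← List.toFinset_card_of_nodup h]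
  congr 1; ext x; simp [h2]

theorem card_altSet_le (b c : Bool) (S T : Finset ℕ) (f : ℕ → ℕ)
    (hf : ∀ x ∈ S, f x ∈ T) (hcard : S.card = T.card)
    (hinj : ∀ x ∈ S, ∀ y ∈ S, f x = f y → x = y)
    (ha : ∀ l : List ℕ, (∀ x ∈ l, x ∈ S) → AltL b l → AltL c (l.map f)) :
    (altSet b S).card ≤ (altSet c T).card := by
  have himg : S.image f = T := by
    apply Finset.eq_of_subset_of_card_le
    · intro y; simp only [Finset.mem_image]; rintro ⟨x, hx, rfl⟩; exact hf x hx
    · rw [Finset.card_image_of_injOn (fun x hx y hy => hinj x hx y hy), hcard]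
  refine Finset.card_le_card_of_injOn (List.map f) ?_ ?_
  · intro l hl
    simp only [Finset.mem_coe, mem_altSet] at hl ⊢
    obtain ⟨⟨h1, h2⟩, h3⟩ := hl
    refine ⟨⟨?_, ?_⟩, ha l (fun x hx => (h2 x).1 hx) h3⟩
    · exact h1.map_on (fun x hx y hy => hinj x ((h2 x).1 hx) y ((h2 y).1 hy))
    · intro x; rw [← himg]; simp [h2]
  · intro l hl l' hl' h
    simp only [Finset.mem_coe, mem_altSet] at hl hl'
    have key : ∀ l l' : List ℕ, (∀ x ∈ l, x ∈ S) → (∀ x ∈ l', x ∈ S) → l.map f = l'.map f →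
        l = l' := by
      intro l
      induction l with
      | nil => intro l' _ _ h; simpa using h.symm
      | cons a t ih =>
        intro l' h1 h2 h
        cases l' with
        | nil => simp at h
        | cons a' t' =>
          simp only [List.map_cons, List.cons.injEq] at h
          rw [hinj a (h1 a (by simp)) a' (h2 a' (by simp)) h.1,
            ih t' (fun x hx => h1 x (by simp [hx])) (fun x hx => h2 x (by simp [hx])) h.2]
    exact key l l' (fun x hx => (hl.1.2 x).1 hx) (fun x hx => (hl'.1.2 x).1 hx) h

theorem card_altSet (b : Bool) (S : Finset ℕ) :
    (altSet b S).card = (altSet b (range S.card)).card := by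
  have hfin : {x | x ∈ S}.Finite := S.finite_toSet
  have hc : hfin.toFinset.card = S.card := by congr 1; ext x; simp
  have hcnt : ∀ x ∈ S, Nat.count (fun x => x ∈ S) x < S.card := by
    intro x hx
    have := Nat.count_lt_card (p := fun x => x ∈ S) hfin hx
    rwa [hc] at this
  have hcm : ∀ x ∈ S, ∀ y ∈ S, (x < y ↔ Nat.count (fun x => x ∈ S) x < Nat.count (fun x => x ∈ S) y) := by
    intro x hx y hy
    constructor
    · intro h; exact Nat.count_strict_mono hx h
    · intro h; by_contra h'
      exact absurd (Nat.count_monotone (fun x => x ∈ S) (not_lt.1 h')) (not_le.2 h)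
  have hnm : StrictMonoOn (Nat.nth (fun x => x ∈ S)) (Set.Iio S.card) := by
    have := Nat.nth_strictMonoOn hfin
    rwa [hc] at this
  apply le_antisymm
  · refine card_altSet_le b b _ _ (Nat.count (fun x => x ∈ S)) ?_ (by simp) ?_ ?_
    · intro x hx; simpa using hcnt x hx
    · intro x hx y hy h
      have := hcm x hx y hy
      have := hcm y hy x hx
      omega
    · intro l hl h
      exact (altL_map _ l (fun x hx y hy => hcm x (hl x hx) y (hl y hy)) b).2 h
  · refine card_altSet_le b b _ _ (Nat.nth (fun x => x ∈ S)) ?_ (by simp) ?_ ?_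
    · intro x hx
      refine Nat.nth_mem (p := fun x => x ∈ S) x (fun h => ?_)
      rw [hc]; simpa using hx
    · intro x hx y hy h
      exact hnm.injOn (by simpa using hx) (by simpa using hy) h
    · intro l hl h
      refine (altL_map _ l (fun x hx y hy => ?_) b).2 h
      exact (hnm.lt_iff_lt (by simpa using hl x hx) (by simpa using hl y hy)).symm

theorem card_altSet_not (b : Bool) (m : ℕ) :
    (altSet b (range m)).card ≤ (altSet (!b) (range m)).card := by
  refine card_altSet_le _ _ _ _ (fun x => m - 1 - x) ?_ rfl ?_ ?_
  · intro x hx; simp at hx ⊢; omega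
  · intro x hx y hy h; simp at hx hy h; omega
  · intro l hl h
    refine (altL_map_anti _ l (fun x hx y hy => ?_) b).2 h
    have := hl x hx; have := hl y hy
    simp at *; omega

open Classical in
theorem ncard_perm (m : ℕ) (P : List ℕ → Prop) :
    {σ : Equiv.Perm (Fin m) | P (List.ofFn fun i => (σ i : ℕ))}.ncard
      = ((ords (range m)).filter P).card := by
  rw [← Set.ncard_coe_finset]
  refine Set.ncard_congr (fun σ _ => List.ofFn fun i => (σ i : ℕ)) ?_ ?_ ?_
  · intro σ hσ
    simp only [Finset.coe_filter, mem_lists', Set.mem_ofPred_eq]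
    refine ⟨⟨?_, ?_⟩, hσ⟩
    · rw [List.nodup_ofFn]
      intro x y h
      exact σ.injective (Fin.ext h)
    · intro x
      simp only [List.mem_ofFn, Finset.mem_range]
      constructor
      · rintro ⟨i, rfl⟩; exact (σ i).2
      · intro hx; exact ⟨σ.symm ⟨x, hx⟩, by simp⟩
  · intro σ τ _ _ h
    ext i
    have := congrFun (List.ofFn_injective h) i
    simpa using this
  · intro l hl
    simp only [Finset.coe_filter, mem_lists', Set.mem_ofPred_eq] at hl
    obtain ⟨⟨h1, h2⟩, h3⟩ := hl
    have hlen : l.length = m := by simpa using length_of_mem h1 h2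
    subst hlen
    let f : Fin l.length → Fin l.length := fun i =>
      ⟨l[i], by simpa using (h2 l[i]).1 (List.getElem_mem _)⟩
    have hf : Function.Injective f := by
      intro i j h
      have h' : l[i] = l[j] := by simpa [f] using h
      exact Fin.ext ((h1.getElem_inj_iff).1 h')
    refine ⟨Equiv.ofBijective f (Finite.injective_iff_bijective.1 hf), ?_, ?_⟩
    · simpa [f] using h3
    · simp [f]

theorem upDown_iff_s18 {m : ℕ} (σ : Equiv.Perm (Fin m)) :
    UpDown σ ↔ AltL true (List.ofFn fun i => (σ i : ℕ)) := by
  rw [altL_iff]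
  simp only [List.length_ofFn, List.getElem_ofFn, UpDown]
  constructor
  · intro h i hi
    have := h ⟨i, by omega⟩ hi
    simpa using this
  · intro h i hi
    have := h i hi
    simpa using this

theorem downUp_iff_s18 {m : ℕ} (σ : Equiv.Perm (Fin m)) :
    DownUp σ ↔ AltL false (List.ofFn fun i => (σ i : ℕ)) := by
  rw [altL_iff]
  simp only [List.length_ofFn, List.getElem_ofFn, DownUp]
  constructor
  · intro h i hi
    have := h ⟨i, by omega⟩ hi
    by_cases h : Even i <;> simpa [h] using this
  · intro h i hi
    have := h i hi
    by_cases h : Even i.val <;> simpa [h] using this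

theorem card_altSet_false (S : Finset ℕ) : (altSet false S).card = UDcount S.card := by
  rw [card_altSet, UDcount]
  simp only [upDown_iff_s18]
  rw [ncard_perm]
  exact le_antisymm (card_altSet_not false _) (card_altSet_not true _)
/-- Lists whose minimum is in second position and whose first entry is not `N`. -/
def PB (N : ℕ) (l : List ℕ) : Prop := ∃ a t, l = a :: 0 :: t ∧ a ≠ N

/-- Lists with first entry `N`, and zero at index `q + 2`, and second entry smallest before. -/
def PA (N q : ℕ) (l : List ℕ) : Prop := ∃ m l1 l2, l = N :: m :: (l1 ++ 0 :: l2) ∧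
  l1.length = q ∧ ∀ x ∈ l1, m < x

open Classical in
theorem card_PB (n : ℕ) (hn : 2 ≤ n) :
    ((altSet false (range (2*n+1))).filter (PB (2*n))).card = (2*n-1) * UDcount (2*n-1) := by
  have hs : ((Icc 1 (2*n-1)).sigma fun a => altSet false ((range (2*n+1) \ {0, a}))).card
      = (2*n-1) * UDcount (2*n-1) := by
    rw [Finset.card_sigma]
    rw [Finset.sum_congr rfl (g := fun _ => UDcount (2*n-1))]
    · simp
    · intro a ha
      simp at ha
      rw [card_altSet_false, Finset.card_sdiff_of_subset, Finset.card_pair (by omega), card_range]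
      · rfl
      · intro x; simp; omega
  rw [← hs]; symm
  refine Finset.card_bij (fun p _ => p.1 :: 0 :: p.2) ?_ ?_ ?_
  · rintro ⟨a, t⟩ h
    simp only [Finset.mem_sigma, mem_altSet, Finset.mem_filter, Finset.mem_Icc] at h ⊢
    obtain ⟨ha, ⟨h1, h2⟩, h3⟩ := h
    have h2' : ∀ x, x ∈ t ↔ x < 2*n+1 ∧ x ≠ 0 ∧ x ≠ a := by
      intro x; rw [h2]; simp
    refine ⟨⟨⟨?_, ?_⟩, ?_⟩, ⟨a, t, rfl, by omega⟩⟩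
    · simp only [List.nodup_cons, List.mem_cons, h2']
      refine ⟨by omega, by omega, h1⟩
    · intro x; simp only [List.mem_cons, h2', Finset.mem_range]; omega
    · simp only [AltL]
      refine ⟨by simp; omega, ?_⟩
      simp only [Bool.not_false]
      rw [altL_cons_up]
      · exact h3
      · intro x hx; rw [h2'] at hx; omega
  · rintro ⟨a, t⟩ _ ⟨a', t'⟩ _ h
    simp at h
    obtain ⟨rfl, rfl⟩ := h; rfl
  · intro l hl
    simp only [mem_altSet, Finset.mem_filter] at hl
    obtain ⟨⟨⟨h1, h2⟩, h3⟩, a, t, rfl, ha⟩ := hl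
    simp only [List.nodup_cons, List.mem_cons, not_or] at h1 h2
    refine ⟨⟨a, t⟩, ?_, rfl⟩
    have ha2 := (h2 a).1 (by simp)
    simp only [Finset.mem_range] at h2 ha2
    simp only [Finset.mem_sigma, mem_altSet, Finset.mem_Icc]
    have h2' : ∀ x, x ∈ t ↔ x ∈ range (2*n+1) \ {0, a} := by
      intro x; have := h2 x
      simp only [Finset.mem_sdiff, Finset.mem_range, Finset.mem_insert, Finset.mem_singleton]
      constructor
      · intro hx
        refine ⟨this.1 (by simp [hx]), ?_⟩
        rintro (rfl | rfl)
        · exact h1.2.1 hx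
        · exact h1.1.2 hx
      · rintro ⟨hx, hx'⟩; have := this.2 hx; tauto
    refine ⟨⟨by omega, by omega⟩, ⟨h1.2.2, h2'⟩, ?_⟩
    simp only [AltL, Bool.not_false] at h3
    rw [altL_cons_up] at h3
    · exact h3.2
    · intro x hx; rw [h2'] at hx; simp at hx; omega

open Classical in
theorem card_PA (n k : ℕ) (hk : 2 ≤ k) (hkn : k ≤ n) :
    ((altSet false (range (2*n+1))).filter (PA (2*n) (2*k-3))).card
      = (2*n - 1).choose (2*k - 2) * UDcount (2*k - 3) * UDcount (2*n - 2*k + 1) := by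
  have hs : ((powersetCard (2*k-2) (Icc 1 (2*n-1))).sigma fun T =>
      altSet false (T.erase (sInf (T : Set ℕ))) ×ˢ altSet false (Icc 1 (2*n-1) \ T)).card
      = (2*n - 1).choose (2*k - 2) * UDcount (2*k - 3) * UDcount (2*n - 2*k + 1) := by
    rw [Finset.card_sigma]
    rw [Finset.sum_congr rfl (g := fun _ => UDcount (2*k-3) * UDcount (2*n-2*k+1))]
    · simp [mul_assoc]
    · intro T hT
      rw [Finset.mem_powersetCard] at hT
      have hne : (T : Set ℕ).Nonempty := by
        rw [Finset.coe_nonempty, ← Finset.card_pos]; omega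
      have := Nat.sInf_mem hne
      rw [Finset.card_product, card_altSet_false, card_altSet_false,
        Finset.card_sdiff_of_subset hT.1, Finset.card_erase_of_mem (by simpa using this), hT.2]
      congr 2
      simp; omega
  rw [← hs]; symm
  refine Finset.card_bij
    (fun p _ => (2*n) :: sInf (p.1 : Set ℕ) :: (p.2.1 ++ 0 :: p.2.2)) ?_ ?_ ?_
  · rintro ⟨T, l1, l2⟩ h
    simp only [Finset.mem_sigma, Finset.mem_powersetCard, Finset.mem_product, mem_altSet,
      Finset.mem_filter, Finset.mem_erase, Finset.mem_sdiff, Finset.mem_Icc] at h ⊢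
    obtain ⟨⟨hT, hTc⟩, ⟨⟨h1, h1m⟩, h1a⟩, ⟨h2, h2m⟩, h2a⟩ := h
    have hne : (T : Set ℕ).Nonempty := by
      rw [Finset.coe_nonempty, ← Finset.card_pos]; omega
    have hm : sInf (T : Set ℕ) ∈ T := Nat.sInf_mem hne
    have hmle : ∀ x ∈ T, sInf (T : Set ℕ) ≤ x := fun x hx => Nat.sInf_le hx
    generalize sInf (T : Set ℕ) = m at *
    have hT' : ∀ x ∈ T, 1 ≤ x ∧ x ≤ 2*n-1 := fun x hx => by simpa using hT hx
    have hmT := hT' m hm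
    have hlt : ∀ x ∈ l1, m < x := by
      intro x hx; have := (h1m x).1 hx; have := hmle x this.2; omega
    have hlen : l1.length = 2*k-3 := by
      rw [length_of_mem (S := T.erase m) h1 (by simpa using h1m),
        Finset.card_erase_of_mem hm]; omega
    refine ⟨⟨⟨?_, ?_⟩, ?_⟩, ⟨m, l1, l2, rfl, hlen, hlt⟩⟩
    · simp only [List.nodup_cons, List.nodup_append, List.mem_cons, List.mem_append, h1m, h2m]
      refine ⟨?_, ?_, h1, ⟨?_, h2⟩, ?_⟩
      · rintro (h | h | h | h)
        · omega
        · have := hT' _ h.2; omega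
        · omega
        · omega
      · rintro (h | h | h)
        · exact h.1 rfl
        · omega
        · exact h.2 hm
      · omega
      · rintro a ⟨_, ha⟩ b (rfl | hb) rfl
        · have := hT' _ ha; omega
        · exact hb.2 ha
    · intro x
      simp only [List.mem_cons, List.mem_append, h1m, h2m, Finset.mem_range]
      by_cases hx : x ∈ T
      · have := hT' x hx
        by_cases hxm : x = m
        · simp [hxm]; omega
        · simp [hxm, hx]; omega
      · have : x ≠ m := fun h => hx (h ▸ hm)
        simp [hx, this]; omega
    · simp only [AltL, Bool.not_false]
      refine ⟨by simp; omega, ?_⟩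
      have hpos1 : ∀ x ∈ l1, 0 < x := fun x hx => by have := hlt x hx; omega
      have hpos2 : ∀ x ∈ l2, 0 < x := fun x hx => by have := (h2m x).1 hx; omega
      have happ := (altL_append l2 hpos2 l1 false (by
        simp [hlen, Nat.odd_iff]; omega) hpos1).2 ⟨h1a, h2a⟩
      cases l1 with
      | nil => simp at hlen; omega
      | cons y t =>
        simp only [List.cons_append, AltL] at happ ⊢
        refine ⟨by simpa using hlt y (by simp), by simpa using happ⟩
  · rintro ⟨T, l1, l2⟩ h ⟨T', l1', l2'⟩ h' heq
    simp only [Finset.mem_sigma, Finset.mem_powersetCard, Finset.mem_product, mem_altSet] at h h'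
    obtain ⟨⟨hT, hTc⟩, ⟨⟨h1, h1m⟩, h1a⟩, ⟨h2, h2m⟩, h2a⟩ := h
    obtain ⟨⟨hT', hTc'⟩, ⟨⟨h1', h1m'⟩, h1a'⟩, ⟨h2', h2m'⟩, h2a'⟩ := h'
    have hne : (T : Set ℕ).Nonempty := by
      rw [Finset.coe_nonempty, ← Finset.card_pos]; omega
    have hne' : (T' : Set ℕ).Nonempty := by
      rw [Finset.coe_nonempty, ← Finset.card_pos]; omega
    have hm : sInf (T : Set ℕ) ∈ T := Nat.sInf_mem hne
    have hm' : sInf (T' : Set ℕ) ∈ T' := Nat.sInf_mem hne'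
    have hl1 := length_of_mem h1 h1m
    have hl1' := length_of_mem h1' h1m'
    rw [Finset.card_erase_of_mem hm] at hl1
    rw [Finset.card_erase_of_mem hm'] at hl1'
    simp only [List.cons.injEq, true_and] at heq
    obtain ⟨he, heq⟩ := heq
    obtain ⟨rfl, hh⟩ := List.append_inj heq (by omega)
    simp only [List.cons.injEq, true_and] at hh
    subst hh
    have : T = T' := by
      rw [← Finset.insert_erase hm, ← Finset.insert_erase hm']
      rw [← he] at *
      congr 1
      ext x; rw [← h1m, ← h1m']
    subst this
    rfl
  · intro l hl
    simp only [mem_altSet, Finset.mem_filter] at hl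
    obtain ⟨⟨⟨h1, h2⟩, h3⟩, m, l1, l2, rfl, hlen, hlt⟩ := hl
    simp only [List.nodup_cons, List.nodup_append, List.mem_cons, List.mem_append, not_or,
      Finset.mem_range] at h1 h2
    obtain ⟨⟨a1, a2, a3, a4⟩, ⟨b1, b2, b3⟩, c1, ⟨d1, d2⟩, e⟩ := h1
    have hml := (h2 m).1 (by simp)
    have hinf : sInf ((insert m l1.toFinset : Finset ℕ) : Set ℕ) = m := by
      apply le_antisymm
      · exact Nat.sInf_le (by simp)
      · apply le_csInf ⟨m, by simp⟩
        intro x hx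
        simp at hx
        rcases hx with rfl | hx
        · exact le_rfl
        · exact (hlt x hx).le
    have hpos1 : ∀ x ∈ l1, 0 < x := fun x hx => by have := hlt x hx; omega
    have hpos2 : ∀ x ∈ l2, 0 < x := fun x hx => by
      rcases Nat.eq_zero_or_pos x with rfl | h
      · exact absurd hx d1
      · exact h
    have hb1 : ∀ x ∈ l1, x < 2*n := fun x hx => by
      have := (h2 x).1 (by simp [hx])
      have : x ≠ 2*n := by rintro rfl; exact a2 hx
      omega
    have hb2 : ∀ x ∈ l2, x < 2*n := fun x hx => by
      have := (h2 x).1 (by simp [hx])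
      have : x ≠ 2*n := by rintro rfl; exact a4 hx
      omega
    refine ⟨⟨insert m l1.toFinset, l1, l2⟩, ?_, by simp only [hinf]⟩
    simp only [Finset.mem_sigma, Finset.mem_powersetCard, Finset.mem_product, mem_altSet, hinf]
    have halt : AltL false l1 ∧ AltL false l2 := by
      rw [← altL_append l2 hpos2 l1 false (by simp [hlen, Nat.odd_iff]; omega) hpos1]
      cases l1 with
      | nil => simp at hlen; omega
      | cons y t => simpa [AltL] using h3.2.2
    refine ⟨⟨?_, ?_⟩, ⟨⟨c1, ?_⟩, halt.1⟩, ⟨d2, ?_⟩, halt.2⟩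
    · intro x hx
      simp at hx ⊢
      rcases hx with rfl | hx
      · omega
      · have := hpos1 x hx; have := hb1 x hx; omega
    · rw [Finset.card_insert_of_notMem (by simpa using b1), List.toFinset_card_of_nodup c1]; omega
    · intro x
      rw [Finset.erase_insert (by simpa using b1)]; simp
    · intro x
      simp only [Finset.mem_sdiff, Finset.mem_Icc, Finset.mem_insert, List.mem_toFinset]
      constructor
      · intro hx
        have := hpos2 x hx; have := hb2 x hx
        refine ⟨by omega, ?_⟩
        rintro (rfl | hx')
        · exact b3 hx
        · exact e x hx' x (Or.inr hx) rfl
      · rintro ⟨hx, hx'⟩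
        have := (h2 x).2 (by omega)
        rcases this with h | h | h | h | h
        · omega
        · exact absurd (Or.inl h) hx'
        · exact absurd (Or.inr h) hx'
        · omega
        · exact h

theorem mmp_char (n : ℕ) (hn : 2 ≤ n) (σ : Equiv.Perm (Fin (2*n+1))) (hσ : DownUp σ) :
    mmp1 σ = 2 ↔ ((σ ⟨0, by omega⟩).val ≠ 2*n ∧ (σ ⟨1, by omega⟩).val = 0) ∨
      ((σ ⟨0, by omega⟩).val = 2*n ∧ ∃ k, ∃ h : 2 ≤ k ∧ k ≤ n, (σ ⟨2*k-1, by omega⟩).val = 0 ∧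
        ∀ j : Fin (2*n+1), 1 < j.val → j.val < 2*k-1 → σ ⟨1, by omega⟩ < σ j) := by
  have hdown : ∀ i (h : i+1 < 2*n+1), i % 2 = 0 → σ ⟨i+1, h⟩ < σ ⟨i, by omega⟩ := by
    intro i h hi
    have := hσ ⟨i, by omega⟩ h
    simpa [Nat.even_iff, hi] using this
  have hup : ∀ i (h : i+1 < 2*n+1), i % 2 = 1 → σ ⟨i, by omega⟩ < σ ⟨i+1, h⟩ := by
    intro i h hi
    have := hσ ⟨i, by omega⟩ h
    simpa [Nat.even_iff, hi] using this
  have F1 : ∀ i : Fin (2*n+1), i.val ≠ 0 → (∀ j, j < i → ¬ σ j < σ i) → i.val % 2 = 1 := by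
    intro i h0 h
    by_contra hodd
    have h1 := hup (i.val - 1) (by omega) (by omega)
    have h2 : (⟨i.val - 1 + 1, by omega⟩ : Fin (2*n+1)) = i := by ext; simp; omega
    rw [h2] at h1
    exact h _ (by rw [Fin.lt_def]; dsimp only; omega) h1
  have F2 : ∀ i : Fin (2*n+1), i.val ≠ 0 → (∀ j, j < i → ¬ σ j < σ i) → Matches1 σ i := by
    intro i h0 h
    have hodd := F1 i h0 h
    refine ⟨⟨⟨i.val+1, by omega⟩, by rw [Fin.lt_def]; simp, hup i.val (by omega) hodd⟩, ?_⟩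
    rintro ⟨j, hj, hj'⟩
    exact h j hj hj'
  have F3 : Matches1 σ ⟨0, by omega⟩ ↔ (σ ⟨0, by omega⟩).val ≠ 2*n := by
    constructor
    · rintro ⟨⟨j, hj, hj'⟩, _⟩
      rw [Fin.lt_def] at hj'
      have := (σ j).2
      omega
    · intro h
      refine ⟨⟨σ.symm ⟨2*n, by omega⟩, ?_, ?_⟩, ?_⟩
      · rw [Fin.lt_def]
        by_contra h'
        apply h
        have : (⟨0, by omega⟩ : Fin (2*n+1)) = σ.symm ⟨2*n, by omega⟩ := by
          ext; simp only [] at h' ⊢; omega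
        rw [this]; simp
      · rw [Fin.lt_def]; simp only [Equiv.apply_symm_apply]; omega
      · rintro ⟨j, hj, _⟩; rw [Fin.lt_def] at hj; simp at hj
  have h10 := hdown 0 (by omega) rfl
  simp only [zero_add] at h10
  have F4 : Matches1 σ ⟨1, by omega⟩ := by
    apply F2 _ (by simp)
    intro j hj
    rw [Fin.lt_def] at hj
    have : j = ⟨0, by omega⟩ := by ext; dsimp only at hj ⊢; omega
    rw [this]
    exact not_lt.2 h10.le
  obtain ⟨p, hp⟩ : ∃ p, (σ p).val = 0 := ⟨σ.symm ⟨0, by omega⟩, by simp⟩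
  have hpu : ∀ q, (σ q).val = 0 → q = p := fun q hq => σ.injective (Fin.ext (hq.trans hp.symm))
  have hp0 : p.val ≠ 0 := by
    intro h
    have : p = ⟨0, by omega⟩ := Fin.ext h
    rw [this] at hp
    rw [Fin.lt_def] at h10; omega
  have hpl : ∀ j, j < p → ¬ σ j < σ p := by
    intro j _ h; rw [Fin.lt_def] at h; omega
  have hpM := F2 p hp0 hpl
  have hpodd := F1 p hp0 hpl
  have hple : ∀ i, Matches1 σ i → i ≤ p := by
    rintro i ⟨_, h⟩
    by_contra hi
    refine h ⟨p, not_le.1 hi, ?_⟩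
    rw [Fin.lt_def]
    have : (σ i).val ≠ 0 := fun h => hi (hpu i h).le
    omega
  have two : ∀ a b, a ≠ b → Matches1 σ a → Matches1 σ b → mmp1 σ = 2 →
      ∀ i, Matches1 σ i → i = a ∨ i = b := by
    intro a b hab ha hb h i hi
    have hsub : ({a, b} : Set (Fin (2*n+1))) ⊆ {i | Matches1 σ i} := by
      rintro x (rfl | rfl) <;> assumption
    have := Set.eq_of_subset_of_ncard_le hsub (by rw [Set.ncard_pair hab]; exact h.le)
      (Set.toFinite _)
    have hi' : i ∈ ({a, b} : Set (Fin (2*n+1))) := by rw [this]; exact hi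
    simpa using hi'
  have two' : ∀ a b, a ≠ b → Matches1 σ a → Matches1 σ b → 
      (∀ i, Matches1 σ i → i = a ∨ i = b) → mmp1 σ = 2 := by
    intro a b hab ha hb h
    have : {i | Matches1 σ i} = ({a, b} : Set (Fin (2*n+1))) := by
      ext x
      constructor
      · intro hx; simpa using h x hx
      · rintro (rfl | rfl) <;> assumption
    rw [mmp1, this, Set.ncard_pair hab]
  by_cases h0 : (σ ⟨0, by omega⟩).val = 2*n
  · simp only [h0, ne_eq, not_true_eq_false, false_and, false_or, true_and]
    constructor
    · intro h
      have hp1 : p ≠ ⟨1, by omega⟩ := by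
        intro hp1
        obtain ⟨i, hi, hi'⟩ : ∃ i, Matches1 σ i ∧ i ≠ p := by
          by_contra hcon
          push Not at hcon
          have : {i | Matches1 σ i} = ({p} : Set (Fin (2*n+1))) := by
            ext x
            exact ⟨fun hx => hcon x hx, fun hx => by rw [hx]; exact hpM⟩
          rw [mmp1, this, Set.ncard_singleton] at h
          omega
        have h1 := hple i hi
        rw [hp1] at h1 hi'
        have : i = ⟨0, by omega⟩ := by
          rw [Fin.le_def] at h1
          ext
          have : i.val ≠ 1 := fun h => hi' (Fin.ext h)
          dsimp only at h1 ⊢; omega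
        rw [this] at hi
        exact F3.1 hi h0
      have hp1' : p.val ≠ 1 := fun h => hp1 (Fin.ext h)
      have hall := two _ _ hp1 hpM F4 h
      refine ⟨(p.val+1)/2, ⟨by omega, by omega⟩, ?_, ?_⟩
      · have : (⟨2 * ((p.val+1)/2) - 1, by omega⟩ : Fin (2*n+1)) = p := by
          ext; simp; omega
        rw [this, hp]
      · intro j hj1 hj2
        have hjp : j < p := by rw [Fin.lt_def]; omega
        obtain ⟨q, hq, hqmin⟩ := Finset.exists_min_image (Finset.univ.filter (· < p)) σ
          ⟨j, by simpa using hjp⟩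
        simp only [Finset.mem_filter, Finset.mem_univ, true_and] at hq hqmin
        have hq0 : q.val ≠ 0 := by
          intro hq0
          have h1 := hqmin j hjp
          have : q = ⟨0, by omega⟩ := Fin.ext hq0
          rw [this, Fin.le_def, h0] at h1
          have h2 : σ j ≠ σ ⟨0, by omega⟩ := fun h => by
            have := congrArg Fin.val (σ.injective h); dsimp only at this; omega
          have h3 : (σ j).val ≠ 2*n := fun h => h2 (Fin.ext (h.trans h0.symm))
          have := (σ j).2
          omega
        have hqM := F2 q hq0 (fun i hi => not_lt.2 (hqmin i (hi.trans hq)))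
        rcases hall q hqM with h1 | h1
        · exact absurd h1 hq.ne
        · rw [← h1]
          refine lt_of_le_of_ne (hqmin j hjp) fun h => ?_
          have := congrArg Fin.val (σ.injective h)
          rw [h1] at this; dsimp only at this; omega
    · rintro ⟨k, hk, hk0, hkl⟩
      have hpk := hpu _ hk0
      refine two' p ⟨1, by omega⟩ ?_ hpM F4 ?_
      · rw [← hpk]; intro h; have := congrArg Fin.val h; dsimp only at this; omega
      · intro i hi
        have h1 := hple i hi
        by_contra hcon
        push Not at hcon
        have hi0 : i.val ≠ 0 := by
          intro h
          have : i = ⟨0, by omega⟩ := Fin.ext h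
          rw [this] at hi
          exact F3.1 hi h0
        have hi1 : i.val ≠ 1 := fun h => hcon.2 (Fin.ext h)
        have hip : i < p := lt_of_le_of_ne h1 hcon.1
        rw [← hpk, Fin.lt_def] at hip
        exact hi.2 ⟨⟨1, by omega⟩, by rw [Fin.lt_def]; simp; omega,
          hkl i (by omega) hip⟩
  · simp only [h0, ne_eq, not_false_eq_true, true_and, false_and, or_false]
    have h01 : (⟨0, by omega⟩ : Fin (2*n+1)) ≠ ⟨1, by omega⟩ := by simp
    constructor
    · intro h
      rcases two _ _ h01 (F3.2 h0) F4 h p hpM with h1 | h1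
      · exact absurd (congrArg Fin.val h1) hp0
      · rw [← h1, hp]
    · intro h
      refine two' _ _ h01 (F3.2 h0) F4 fun i hi => ?_
      have h1 := hple i hi
      rw [← hpu _ h, Fin.le_def] at h1
      simp only at h1
      rcases Nat.lt_or_ge i.val 1 with h2 | h2
      · left; ext; dsimp only; omega
      · right; ext; dsimp only; omega

theorem PB_iff (N : ℕ) (l : List ℕ) (h : 2 ≤ l.length) : PB N l ↔ l[0] ≠ N ∧ l[1] = 0 := by
  match l, h with
  | a :: b :: t, _ =>
    simp [PB]
    constructor
    · rintro ⟨h1, h2⟩; exact ⟨h2, h1⟩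
    · rintro ⟨h1, h2⟩; exact ⟨h2, h1⟩

theorem PA_iff (N q : ℕ) (l : List ℕ) (h : q + 2 < l.length) : PA N q l ↔
    l[0] = N ∧ l[q+2] = 0 ∧ ∀ j, ∀ hj : j < q + 2, 1 < j → l[1] < l[j] := by
  constructor
  · rintro ⟨m, l1, l2, rfl, rfl, hm⟩
    refine ⟨by simp, by simp, ?_⟩
    intro j hj hj1
    obtain ⟨j, rfl⟩ : ∃ i, j = i + 2 := ⟨j - 2, by omega⟩
    have hj' : j < l1.length := by omega
    simp only [List.getElem_cons_succ, List.getElem_cons_zero]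
    rw [List.getElem_append_left hj']
    exact hm _ (List.getElem_mem _)
  · match l, h with
    | a :: m :: t, h =>
      simp only [List.length_cons] at h
      have hq : q < t.length := by omega
      rintro ⟨h0, h1, h2⟩
      simp only [List.getElem_cons_succ, List.getElem_cons_zero] at h0 h1 h2
      refine ⟨m, t.take q, t.drop (q+1), ?_, by simp; omega, ?_⟩
      · rw [h0, ← h1, List.getElem_cons_drop, List.take_append_drop]
      · intro x hx
        obtain ⟨i, hi, rfl⟩ := List.getElem_of_mem hx
        simp only [List.length_take] at hi
        have := h2 (i+2) (by omega) (by omega)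
        simpa using this

theorem set_char (n : ℕ) (hn : 2 ≤ n) (σ : Equiv.Perm (Fin (2*n+1))) :
    (DownUp σ ∧ mmp1 σ = 2) ↔ (fun l => AltL false l ∧
      (PB (2*n) l ∨ ∃ k ∈ Icc 2 n, PA (2*n) (2*k-3) l)) (List.ofFn fun i => (σ i : ℕ)) := by
  simp only
  rw [← downUp_iff_s18]
  refine and_congr_right fun h => ?_
  rw [mmp_char n hn σ h]
  refine or_congr ?_ ?_
  · rw [PB_iff _ _ (by simp; omega)]
    simp
  · constructor
    · rintro ⟨h0, k, hk, h1, h2⟩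
      refine ⟨k, by simpa using hk, ?_⟩
      rw [PA_iff _ _ _ (by simp; omega)]
      simp only [List.getElem_ofFn]
      refine ⟨h0, ?_, ?_⟩
      · refine Eq.trans ?_ h1; congr 3; omega
      · intro j hj hj1
        exact h2 ⟨j, by omega⟩ hj1 (by simp; omega)
    · rintro ⟨k, hk, h⟩
      simp only [Finset.mem_Icc] at hk
      rw [PA_iff _ _ _ (by simp; omega)] at h
      simp only [List.getElem_ofFn] at h
      obtain ⟨h0, h1, h2⟩ := h
      refine ⟨h0, k, hk, ?_, ?_⟩
      · refine Eq.trans ?_ h1; congr 3; omega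
      · intro j hj hj1
        exact h2 j.val (by omega) hj

theorem stmt18 (n : ℕ) (hn : 2 ≤ n) :
    {σ : Equiv.Perm (Fin (2*n+1)) | DownUp σ ∧ mmp1 σ = 2}.ncard
      = (2*n - 1) * UDcount (2*n - 1)
        + ∑ k ∈ Finset.Icc 2 n,
            (2*n - 1).choose (2*k - 2) * UDcount (2*k - 3) * UDcount (2*n - 2*k + 1) := by
  classical
  simp only [set_char n hn]
  rw [ncard_perm (2*n+1) (fun l => AltL false l ∧
      (PB (2*n) l ∨ ∃ k ∈ Icc 2 n, PA (2*n) (2*k-3) l))]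
  have hset : (ords (range (2*n+1))).filter (fun l => AltL false l ∧
      (PB (2*n) l ∨ ∃ k ∈ Icc 2 n, PA (2*n) (2*k-3) l))
      = (altSet false (range (2*n+1))).filter (PB (2*n)) ∪
        (Icc 2 n).biUnion fun k => (altSet false (range (2*n+1))).filter (PA (2*n) (2*k-3)) := by
    ext l
    simp only [altSet, Finset.mem_filter, Finset.mem_union, Finset.mem_biUnion]
    constructor
    · rintro ⟨h1, h2, h3 | ⟨k, hk, h3⟩⟩
      · exact Or.inl ⟨⟨h1, h2⟩, h3⟩
      · exact Or.inr ⟨k, hk, ⟨h1, h2⟩, h3⟩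
    · rintro (⟨⟨h1, h2⟩, h3⟩ | ⟨k, hk, ⟨h1, h2⟩, h3⟩)
      · exact ⟨h1, h2, Or.inl h3⟩
      · exact ⟨h1, h2, Or.inr ⟨k, hk, h3⟩⟩
  have e : ∀ (inst : DecidablePred fun l => AltL false l ∧
      (PB (2*n) l ∨ ∃ k ∈ Icc 2 n, PA (2*n) (2*k-3) l)),
      (@Finset.filter _ _ inst (ords (range (2*n+1)))).card = ((altSet false (range (2*n+1))).filter (PB (2*n)) ∪
        (Icc 2 n).biUnion fun k => (altSet false (range (2*n+1))).filter (PA (2*n) (2*k-3))).card := by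
    intro inst
    rw [← hset]; congr!
  rw [e]
  rw [Finset.card_union_of_disjoint, Finset.card_biUnion]
  · congr 1
    · convert card_PB n hn
    · refine Finset.sum_congr rfl fun k hk => ?_
      simp only [Finset.mem_Icc] at hk
      convert card_PA n k hk.1 hk.2
  · intro k hk k' hk' hne
    rw [Function.onFun, Finset.disjoint_left]
    intro l hl hl'
    simp only [Finset.mem_filter, mem_altSet] at hl hl'
    simp only [Finset.mem_coe, Finset.mem_Icc] at hk hk'
    have hlen : l.length = 2*n+1 := by simpa using length_of_mem hl.1.1.1 hl.1.1.2
    have h1 := ((PA_iff _ _ l (by omega)).1 hl.2).2.1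
    have h2 := ((PA_iff _ _ l (by omega)).1 hl'.2).2.1
    have := (hl.1.1.1.getElem_inj_iff).1 (h1.trans h2.symm)
    omega
  · rw [Finset.disjoint_left]
    intro l hl hl'
    simp only [Finset.mem_filter, Finset.mem_biUnion] at hl hl'
    obtain ⟨a, t, rfl, ha⟩ := hl.2
    obtain ⟨k, _, _, m, l1, l2, h, _⟩ := hl'
    simp at h
    exact ha h.1
end
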